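/- arXiv:1310.3546 — 3 statements merged into one kernel-verified Lean document; each statement's English description precedes it below -/
import Mathlib

section
/- For the symmetric group S_n acting on its (n-1)-dimensional reflection representation E, the elliptic pairing ⟨σ,σ'⟩^el = (1/n!) Σ_{w∈S_n} σ(w)σ'(w)det_E(1-w) has radical equal to the span of all characters induced from proper Young (parabolic) subgroups, and the quotient R(S_n)/rad has rank 1, spanned by the class of the sign character. -/
/-!
STATEMENT 0: for S_n with its standard (n-1)-dimensional reflection representation
E and elliptic pairing ⟨σ,σ'⟩^el = (1/n!) Σ_w σ(w)σ'(w)det_E(1-w), the radical of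
the pairing (inside the space of class functions = the span of the characters)
equals the span of the characters induced from proper Young (parabolic) subgroups,
and the quotient has rank 1, spanned by the class of the sign character.
-/

open scoped BigOperators

set_option maxHeartbeats 1000000
set_option synthInstance.maxHeartbeats 400000

noncomputable section

/-- The field `ℚ(q)` of rational functions. -/
abbrev K : Type := RatFunc ℚ

/-- The sum-of-coordinates linear functional on `K^n`. -/
def sumCoords (n : ℕ) : (Fin n → K) →ₗ[K] K :=
  ∑ i : Fin n, LinearMap.proj i

/-- The standard (reflection) representation `E = {x ∈ K^n : Σ x_i = 0}` of `S_n`. -/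
def Esub (n : ℕ) : Submodule K (Fin n → K) := LinearMap.ker (sumCoords n)

/-- The permutation action of `w ∈ S_n` on `K^n`. -/
def permL (n : ℕ) (w : Equiv.Perm (Fin n)) : (Fin n → K) →ₗ[K] (Fin n → K) :=
  LinearMap.funLeft K K w

lemma permL_mem (n : ℕ) (w : Equiv.Perm (Fin n)) (x : Fin n → K) (hx : x ∈ Esub n) :
    permL n w x ∈ Esub n := by
  simp only [Esub, LinearMap.mem_ker, sumCoords, LinearMap.sum_apply, LinearMap.proj_apply,
    permL, LinearMap.funLeft_apply] at hx ⊢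
  rw [← hx]
  exact Fintype.sum_equiv w _ _ (fun i => rfl)

/-- The action of `w` restricted to the reflection representation `E`. -/
def permE (n : ℕ) (w : Equiv.Perm (Fin n)) : Esub n →ₗ[K] Esub n :=
  (permL n w).restrict (fun x hx => permL_mem n w x hx)

/-- `det_E(1 - q w)`. -/
def detE (n : ℕ) (q : K) (w : Equiv.Perm (Fin n)) : K :=
  LinearMap.det ((LinearMap.id : Esub n →ₗ[K] Esub n) - q • permE n w)


open scoped Classical

/-- The elliptic pairing `⟨σ,σ'⟩^el = (1/n!) Σ_w σ(w) σ'(w) det_E(1-w)` on `S_n`. -/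
def ellPair (n : ℕ) (σ σ' : Equiv.Perm (Fin n) → K) : K :=
  ((n.factorial : K))⁻¹ * ∑ w : Equiv.Perm (Fin n), σ w * σ' w * detE n 1 w

/-- The submodule of `K`-valued class functions on a finite group. -/
def classFuns (G : Type) [Group G] [Fintype G] : Submodule K (G → K) where
  carrier := {f | ∀ g h : G, f (g * h * g⁻¹) = f h}
  add_mem' := by intro a b ha hb g h; simp [ha g h, hb g h]
  zero_mem' := by intro g h; rfl
  smul_mem' := by intro c a ha g h; simp [ha g h]

/-- The Young (parabolic) subgroup of `S_n` preserving the fibers of `f`. -/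
def youngSubgroup (n : ℕ) (f : Fin n → ℕ) : Subgroup (Equiv.Perm (Fin n)) where
  carrier := {w | ∀ i, f (w i) = f i}
  one_mem' := by intro i; rfl
  mul_mem' := by
    intro a b ha hb i
    simpa [Equiv.Perm.mul_apply] using (ha (b i)).trans (hb i)
  inv_mem' := by
    intro a ha i
    simpa using (ha (a⁻¹ i)).symm

/-- The class function on `G` induced from the function `φ` on the subgroup `H`. -/
def indCF {G : Type} [Group G] [Fintype G] (H : Subgroup G) (φ : G → K) : G → K :=
  fun w => ((Nat.card H : K))⁻¹ *
    ∑ g : G, if g⁻¹ * w * g ∈ H then φ (g⁻¹ * w * g) else 0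

/-- The radical of the elliptic pairing inside the space of class functions on `S_n`. -/
def ellRadical (n : ℕ) : Submodule K (Equiv.Perm (Fin n) → K) where
  carrier := {σ | σ ∈ classFuns (Equiv.Perm (Fin n)) ∧
      ∀ σ' ∈ classFuns (Equiv.Perm (Fin n)), ellPair n σ σ' = 0}
  zero_mem' := by
    refine ⟨Submodule.zero_mem _, ?_⟩
    intro σ' _
    simp [ellPair]
  add_mem' := by
    rintro a b ⟨ha1, ha2⟩ ⟨hb1, hb2⟩
    refine ⟨Submodule.add_mem _ ha1 hb1, ?_⟩
    intro σ' hσ'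
    have h : ellPair n (a + b) σ' = ellPair n a σ' + ellPair n b σ' := by
      simp only [ellPair, Pi.add_apply, add_mul, Finset.sum_add_distrib, mul_add]
    rw [h, ha2 σ' hσ', hb2 σ' hσ', add_zero]
  smul_mem' := by
    rintro c a ⟨ha1, ha2⟩
    refine ⟨Submodule.smul_mem _ _ ha1, ?_⟩
    intro σ' hσ'
    have h : ellPair n (c • a) σ' = c * ellPair n a σ' := by
      simp only [ellPair, Pi.smul_apply, smul_eq_mul]
      rw [show (∑ w : Equiv.Perm (Fin n), c * a w * σ' w * detE n 1 w)
            = c * ∑ w : Equiv.Perm (Fin n), a w * σ' w * detE n 1 w by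
          rw [Finset.mul_sum]; exact Finset.sum_congr rfl (fun w _ => by ring)]
      ring
    rw [h, ha2 σ' hσ', mul_zero]

/-- The span of all functions induced from proper Young subgroups
(`f` non-constant corresponds to a composition with more than one part). -/
def indSpan (n : ℕ) : Submodule K (Equiv.Perm (Fin n) → K) :=
  Submodule.span K {χ | ∃ (f : Fin n → ℕ) (φ : Equiv.Perm (Fin n) → K),
    (∃ i j, f i ≠ f j) ∧ χ = indCF (youngSubgroup n f) φ}

/-- The sign character of `S_n`. -/
def sgnChar (n : ℕ) : Equiv.Perm (Fin n) → K := fun w => ((Equiv.Perm.sign w : ℤ) : K)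

/-!
Averaging over conjugates, which is `indCF ⊤`, is a projection onto class functions and is
self-adjoint, so the pairing `∑ w, σ w * σ' w` is nondegenerate on class functions. Hence the
radical of the elliptic pairing consists of the class functions `σ` with `σ(w) det_E(1 - w) = 0`
for all `w`. The determinant vanishes at `w` iff `w` fixes a nonzero vector of `E`, iff there is a
nonconstant `w`-invariant function on `{1, …, n}`, iff `w` is not an `n`-cycle; taking the values
of that function in `ℕ`, this says that `w` lies in a proper Young subgroup. On the other side,
the functions induced from a family of subgroups span all class functions that vanish at the
elements with no conjugate in any of these subgroups. Both spaces are therefore the class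
functions vanishing at the `n`-cycles. Since the `n`-cycles form one conjugacy class, this is the
kernel of evaluation at an `n`-cycle, and the sign character is nonzero there.
-/

section ClassFunctions

lemma natCast_card_ne_zero (R A : Type*) [AddMonoidWithOne R] [CharZero R] [Nonempty A]
    [Finite A] : (Nat.card A : R) ≠ 0 :=
  Nat.cast_ne_zero.2 Nat.card_pos.ne'

variable {G : Type} [Group G] [Fintype G]

lemma classFuns_apply_eq_of_isConj {σ : G → K} (hσ : σ ∈ classFuns G) {v w : G}
    (h : IsConj v w) : σ v = σ w := by
  obtain ⟨g, rfl⟩ := isConj_iff.1 h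
  exact (hσ g v).symm

lemma classFuns_apply_inv_mul_mul {σ : G → K} (hσ : σ ∈ classFuns G) (g w : G) :
    σ (g⁻¹ * w * g) = σ w := by
  simpa only [inv_inv] using hσ g⁻¹ w

lemma mul_mem_classFuns {σ τ : G → K} (hσ : σ ∈ classFuns G) (hτ : τ ∈ classFuns G) :
    σ * τ ∈ classFuns G := fun g h => by
  simp only [Pi.mul_apply, hσ g h, hτ g h]

lemma indCF_mem_classFuns (H : Subgroup G) (φ : G → K) : indCF H φ ∈ classFuns G := by
  intro g w
  refine congrArg (_ * ·) (Fintype.sum_equiv (Equiv.mulLeft g⁻¹) _ _ fun x => ?_)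
  simp only [Equiv.coe_mulLeft, mul_inv_rev, inv_inv, mul_assoc]

lemma indCF_apply_eq_zero (H : Subgroup G) (φ : G → K) {w : G} (hw : ∀ g, g⁻¹ * w * g ∉ H) :
    indCF H φ w = 0 := by
  simp only [indCF, hw, if_false, Finset.sum_const_zero, mul_zero]

lemma indCF_eq_sum_single (H : Subgroup G) (φ : G → K) :
    indCF H φ = ∑ v, φ v • indCF H (Pi.single v 1) := by
  funext w
  simp only [indCF, Finset.sum_apply, Pi.smul_apply, smul_eq_mul, mul_left_comm (φ _),
    ← Finset.mul_sum]
  congr 1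
  simp only [Finset.mul_sum]
  rw [Finset.sum_comm]
  refine Finset.sum_congr rfl fun g _ => ?_
  simp only [Pi.single_apply, mul_ite, mul_one, mul_zero]
  split_ifs <;> simp

lemma indCF_top_apply (φ : G → K) (w : G) :
    indCF ⊤ φ w = (Nat.card G : K)⁻¹ * ∑ g, φ (g⁻¹ * w * g) := by
  rw [indCF, Subgroup.card_top]
  simp only [Subgroup.mem_top, if_true]

lemma indCF_top_of_mem_classFuns {σ : G → K} (hσ : σ ∈ classFuns G) : indCF ⊤ σ = σ := by
  funext w
  simp only [indCF_top_apply, classFuns_apply_inv_mul_mul hσ, Finset.sum_const, Finset.card_univ,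
    nsmul_eq_mul, ← Nat.card_eq_fintype_card, inv_mul_cancel_left₀ (natCast_card_ne_zero K G)]

lemma indCF_top_comp_conj (φ : G → K) (x : G) :
    indCF ⊤ (fun w => φ (x⁻¹ * w * x)) = indCF ⊤ φ := by
  funext w
  simp only [indCF_top_apply]
  refine congrArg (_ * ·) (Fintype.sum_equiv (Equiv.mulRight x) _ _ fun g => ?_)
  simp only [Equiv.coe_mulRight, mul_inv_rev, mul_assoc]

lemma indCF_top_single_conj (x v : G) :
    indCF ⊤ (Pi.single (x⁻¹ * v * x) 1) = indCF ⊤ (Pi.single v 1) := by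
  rw [← indCF_top_comp_conj _ x]
  congr 1
  funext w
  simp only [Pi.single_apply, mul_left_inj, mul_right_inj]

lemma indCF_top_eq_smul_indCF {H : Subgroup G} {φ : G → K} (hφ : ∀ w ∉ H, φ w = 0) :
    indCF ⊤ φ = ((Nat.card G : K)⁻¹ * Nat.card H) • indCF H φ := by
  have extend (w : G) : (if w ∈ H then φ w else 0) = φ w :=
    ite_eq_left_iff.2 fun hw => (hφ w hw).symm
  funext w
  rw [indCF_top_apply, Pi.smul_apply, smul_eq_mul, mul_assoc]
  simp only [indCF, extend, mul_inv_cancel_left₀ (natCast_card_ne_zero K H)]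

lemma sum_mul_indCF_top {σ : G → K} (hσ : σ ∈ classFuns G) (φ : G → K) :
    ∑ w, σ w * indCF ⊤ φ w = ∑ w, σ w * φ w := by
  have translate (g : G) : ∑ w, σ w * φ (g⁻¹ * w * g) = ∑ w, σ w * φ w := by
    refine Fintype.sum_equiv (MulAut.conj g⁻¹).toEquiv _ _ fun w => ?_
    simp [classFuns_apply_inv_mul_mul hσ]
  calc ∑ w, σ w * indCF ⊤ φ w
      = (Nat.card G : K)⁻¹ * ∑ w, ∑ g, σ w * φ (g⁻¹ * w * g) := by
        simp only [indCF_top_apply, mul_left_comm (σ _), Finset.mul_sum]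
    _ = (Nat.card G : K)⁻¹ * ∑ _g : G, ∑ w, σ w * φ w := by
        rw [Finset.sum_comm, Finset.sum_congr rfl fun g _ => translate g]
    _ = ∑ w, σ w * φ w := by
        rw [Finset.sum_const, Finset.card_univ, nsmul_eq_mul, ← Nat.card_eq_fintype_card,
          inv_mul_cancel_left₀ (natCast_card_ne_zero K G)]

lemma eq_zero_of_forall_sum_mul_eq_zero {σ : G → K} (hσ : σ ∈ classFuns G)
    (h : ∀ τ ∈ classFuns G, ∑ w, σ w * τ w = 0) : σ = 0 := by
  funext v
  have pairing := h _ (indCF_mem_classFuns ⊤ (Pi.single v 1))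
  rw [sum_mul_indCF_top hσ] at pairing
  simpa [Pi.single_apply] using pairing

theorem mem_span_indCF_iff {ι : Type*} {p : ι → Prop} {H : ι → Subgroup G} {σ : G → K} :
    σ ∈ Submodule.span K {χ | ∃ i φ, p i ∧ χ = indCF (H i) φ} ↔
      σ ∈ classFuns G ∧ ∀ w, (∀ i, p i → ∀ g, g⁻¹ * w * g ∉ H i) → σ w = 0 := by
  constructor
  · intro hσ
    induction hσ using Submodule.span_induction with
    | mem χ hχ =>
      obtain ⟨i, φ, hi, rfl⟩ := hχ
      exact ⟨indCF_mem_classFuns _ φ, fun w hw => indCF_apply_eq_zero _ φ (hw i hi)⟩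
    | zero => exact ⟨zero_mem _, fun _ _ => rfl⟩
    | add σ τ _ _ ihσ ihτ =>
      exact ⟨add_mem ihσ.1 ihτ.1, fun w hw => by simp [ihσ.2 w hw, ihτ.2 w hw]⟩
    | smul a σ _ ih =>
      exact ⟨Submodule.smul_mem _ a ih.1, fun w hw => by simp [ih.2 w hw]⟩
  · rintro ⟨hσ, hvanish⟩
    rw [← indCF_top_of_mem_classFuns hσ, indCF_eq_sum_single]
    refine Submodule.sum_mem _ fun v _ => ?_
    by_cases hv : ∀ i, p i → ∀ g, g⁻¹ * v * g ∉ H i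
    · rw [hvanish v hv, zero_smul]
      exact zero_mem _
    · push Not at hv
      obtain ⟨i, hi, g, hg⟩ := hv
      rw [← indCF_top_single_conj g v, indCF_top_eq_smul_indCF (H := H i) fun w hw =>
        Pi.single_eq_of_ne (ne_of_mem_of_not_mem hg hw).symm 1]
      exact Submodule.smul_mem _ _ <| Submodule.smul_mem _ _ <|
        Submodule.subset_span ⟨i, _, hi, rfl⟩

end ClassFunctions

section FullCycles

-- Unlike `IsCycle`, `IsCycleOn Set.univ` holds for the identity of a one-point set.

variable {α : Type*} {v w : Equiv.Perm α}

lemma apply_eq_of_sameCycle {β : Type*} {f : α → β} (hf : ∀ i, f (w i) = f i) {i j : α}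
    (h : w.SameCycle i j) : f i = f j := by
  obtain ⟨k, rfl⟩ := h
  induction k with
  | zero => rfl
  | succ k ih => rw [ih, add_comm, zpow_add, zpow_one, Equiv.Perm.mul_apply, hf]
  | pred k ih =>
    rw [ih, ← hf ((w ^ (-(k : ℤ) - 1)) i), ← Equiv.Perm.mul_apply, mul_self_zpow, sub_add_cancel]

lemma isCycleOn_univ_iff_forall_invariant {β : Type*} [Nontrivial β] :
    w.IsCycleOn Set.univ ↔ ∀ f : α → β, (∀ i, f (w i) = f i) → ∀ i j, f i = f j := by
  refine ⟨fun h f hf i j => apply_eq_of_sameCycle hf (h.2 trivial trivial), fun h => ?_⟩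
  refine ⟨Set.bijOn_univ.2 w.bijective, fun i _ j _ => ?_⟩
  obtain ⟨a, b, hab⟩ := exists_pair_ne β
  have orbit := h (fun k => if w.SameCycle i k then a else b)
    (fun k => by simp only [Equiv.Perm.sameCycle_apply_right]) i j
  by_contra hij
  exact hab (by simpa [hij, Equiv.Perm.SameCycle.refl] using orbit)

lemma isCycleOn_univ_inv_mul_mul (h : w.IsCycleOn Set.univ) (g : Equiv.Perm α) :
    (g⁻¹ * w * g).IsCycleOn Set.univ := by
  simpa [Set.image_univ_of_surjective g⁻¹.surjective] using h.conj (g := g⁻¹)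

lemma isConj_of_isCycleOn_univ [Finite α] (hv : v.IsCycleOn Set.univ)
    (hw : w.IsCycleOn Set.univ) : IsConj v w := by
  have := Fintype.ofFinite α
  rcases subsingleton_or_nontrivial α with _ | _
  · rw [Subsingleton.elim v w]
  have isCycle_and_support {u : Equiv.Perm α} (hu : u.IsCycleOn Set.univ) :
      u.IsCycle ∧ u.support = Finset.univ := by
    have hne (i : α) : u i ≠ i := hu.apply_ne Set.nontrivial_univ trivial
    exact ⟨Equiv.Perm.isCycle_iff_exists_isCycleOn.2
      ⟨Set.univ, Set.nontrivial_univ, hu, fun _ _ => trivial⟩, by ext i; simp [hne]⟩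
  obtain ⟨hv_cycle, hv_support⟩ := isCycle_and_support hv
  obtain ⟨hw_cycle, hw_support⟩ := isCycle_and_support hw
  exact hv_cycle.isConj hw_cycle (by rw [hv_support, hw_support])

end FullCycles

section ReflectionRepresentation

variable {n : ℕ}

lemma mem_Esub_iff {x : Fin n → K} : x ∈ Esub n ↔ ∑ i, x i = 0 := by
  simp [Esub, sumCoords]

lemma eq_zero_of_mem_Esub_of_forall_eq {x : Fin n → K} (hx : x ∈ Esub n)
    (hconst : ∀ i j, x i = x j) : x = 0 := by
  funext i
  have hn : (n : K) ≠ 0 := Nat.cast_ne_zero.2 i.pos.ne'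
  have hsum : (n : K) * x i = 0 := by
    rw [← mem_Esub_iff.1 hx, Fintype.sum_congr x (fun _ => x i) fun j => hconst j i]
    simp
  exact (mul_eq_zero.1 hsum).resolve_left hn

lemma sub_mean_mem_Esub (x : Fin n → K) : (fun i => x i - (∑ j, x j) / n) ∈ Esub n := by
  rcases Nat.eq_zero_or_pos n with rfl | hn
  · simp [mem_Esub_iff]
  · have hn : (n : K) ≠ 0 := Nat.cast_ne_zero.2 hn.ne'
    simp [mem_Esub_iff, Finset.sum_sub_distrib, mul_div_cancel₀ _ hn]

lemma detE_one_eq_zero_iff_exists_fixed (w : Equiv.Perm (Fin n)) :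
    detE n 1 w = 0 ↔ ∃ x ∈ Esub n, x ≠ 0 ∧ ∀ i, x (w i) = x i := by
  have mem_ker (x : Esub n) :
      x ∈ LinearMap.ker ((LinearMap.id : Esub n →ₗ[K] Esub n) - (1 : K) • permE n w) ↔
        ∀ i, x.1 (w i) = x.1 i := by
    rw [LinearMap.mem_ker, LinearMap.sub_apply, one_smul, sub_eq_zero, eq_comm, Subtype.ext_iff,
      funext_iff]
    rfl
  simp only [detE, LinearMap.det_eq_zero_iff_ker_ne_bot, Submodule.ne_bot_iff, mem_ker,
    Subtype.exists, ne_eq, Submodule.mk_eq_zero]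
  exact exists_congr fun x => by tauto

theorem detE_one_ne_zero_iff_isCycleOn_univ (w : Equiv.Perm (Fin n)) :
    detE n 1 w ≠ 0 ↔ w.IsCycleOn Set.univ := by
  rw [isCycleOn_univ_iff_forall_invariant (β := K), ne_eq, detE_one_eq_zero_iff_exists_fixed]
  constructor
  · intro no_fixed f hf i j
    by_contra hij
    refine no_fixed ⟨_, sub_mean_mem_Esub f, fun h => hij ?_, fun k => by simp only [hf]⟩
    exact sub_left_injective ((congrFun h i).trans (congrFun h j).symm)
  · rintro hconst ⟨x, hx, hx_ne, hfix⟩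
    exact hx_ne (eq_zero_of_mem_Esub_of_forall_eq hx (hconst x hfix))

lemma permE_mul (g h : Equiv.Perm (Fin n)) : permE n (g * h) = permE n h ∘ₗ permE n g := rfl

lemma detE_mem_classFuns (q : K) : detE n q ∈ classFuns (Equiv.Perm (Fin n)) := by
  intro g w
  let e : Esub n ≃ₗ[K] Esub n := LinearEquiv.ofLinearMap (permE n g⁻¹) (permE n g)
    (by rw [← permE_mul, mul_inv_cancel]; rfl) (by rw [← permE_mul, inv_mul_cancel]; rfl)
  have conj : LinearMap.id - q • permE n (g * w * g⁻¹) =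
      (e : Esub n →ₗ[K] Esub n) ∘ₗ (LinearMap.id - q • permE n w) ∘ₗ e.symm := by
    rw [LinearMap.sub_comp, LinearMap.comp_sub, LinearMap.id_comp, LinearEquiv.comp_symm,
      LinearMap.smul_comp, LinearMap.comp_smul]
    rfl
  rw [detE, conj, LinearMap.det_conj, detE]

end ReflectionRepresentation

section EllipticPairing

variable {n : ℕ}

lemma mem_youngSubgroup_iff {f : Fin n → ℕ} {w : Equiv.Perm (Fin n)} :
    w ∈ youngSubgroup n f ↔ ∀ i, f (w i) = f i := Iff.rfl

lemma isCycleOn_univ_iff_forall_conj_notMem_youngSubgroup {w : Equiv.Perm (Fin n)} :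
    w.IsCycleOn Set.univ ↔
      ∀ f : Fin n → ℕ, (∃ i j, f i ≠ f j) → ∀ g, g⁻¹ * w * g ∉ youngSubgroup n f := by
  constructor
  · rintro hw f ⟨i, j, hij⟩ g hg
    exact hij (isCycleOn_univ_iff_forall_invariant.1 (isCycleOn_univ_inv_mul_mul hw g) f hg i j)
  · intro h
    refine (isCycleOn_univ_iff_forall_invariant (β := ℕ)).2 fun f hf i j => ?_
    by_contra hij
    exact h f ⟨i, j, hij⟩ 1 (by simpa [mem_youngSubgroup_iff] using hf)

theorem mem_indSpan_iff {σ : Equiv.Perm (Fin n) → K} :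
    σ ∈ indSpan n ↔ σ ∈ classFuns (Equiv.Perm (Fin n)) ∧ ∀ w, w.IsCycleOn Set.univ → σ w = 0 := by
  simp only [isCycleOn_univ_iff_forall_conj_notMem_youngSubgroup]
  exact mem_span_indCF_iff

lemma ellPair_eq_zero_iff (σ τ : Equiv.Perm (Fin n) → K) :
    ellPair n σ τ = 0 ↔ ∑ w, (σ * detE n 1) w * τ w = 0 := by
  have hn : (n.factorial : K)⁻¹ ≠ 0 := inv_ne_zero (Nat.cast_ne_zero.2 n.factorial_ne_zero)
  simp only [ellPair, mul_eq_zero, hn, false_or, Pi.mul_apply, mul_right_comm]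

theorem mem_ellRadical_iff {σ : Equiv.Perm (Fin n) → K} :
    σ ∈ ellRadical n ↔
      σ ∈ classFuns (Equiv.Perm (Fin n)) ∧ ∀ w, w.IsCycleOn Set.univ → σ w = 0 := by
  have mem_radical : σ ∈ ellRadical n ↔ σ ∈ classFuns (Equiv.Perm (Fin n)) ∧
      ∀ τ ∈ classFuns (Equiv.Perm (Fin n)), ∑ w, (σ * detE n 1) w * τ w = 0 := by
    simp only [← ellPair_eq_zero_iff]
    rfl
  rw [mem_radical]
  refine and_congr_right fun hσ => ?_
  simp only [← detE_one_ne_zero_iff_isCycleOn_univ]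
  constructor
  · intro h w hw
    have hzero := eq_zero_of_forall_sum_mul_eq_zero (mul_mem_classFuns hσ (detE_mem_classFuns 1)) h
    exact (mul_eq_zero.1 (congrFun hzero w)).resolve_right hw
  · intro h τ _
    have hzero : σ * detE n 1 = 0 := funext fun w => by
      by_cases hw : detE n 1 w = 0 <;> simp [hw, h]
    simp only [hzero, Pi.zero_apply, zero_mul, Finset.sum_const_zero]

lemma ellRadical_eq_inf_ker_proj {c : Equiv.Perm (Fin n)} (hc : c.IsCycleOn Set.univ) :
    ellRadical n = classFuns (Equiv.Perm (Fin n)) ⊓ LinearMap.ker (LinearMap.proj c) := by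
  ext σ
  rw [mem_ellRadical_iff, Submodule.mem_inf, LinearMap.mem_ker, LinearMap.proj_apply]
  refine and_congr_right fun hσ => ⟨fun h => h c hc, fun h w hw => ?_⟩
  rw [← classFuns_apply_eq_of_isConj hσ (isConj_of_isCycleOn_univ hc hw), h]

lemma sgnChar_mem_classFuns : sgnChar n ∈ classFuns (Equiv.Perm (Fin n)) := by
  intro g h
  simp [sgnChar, mul_right_comm]

lemma sgnChar_apply_ne_zero (w : Equiv.Perm (Fin n)) : sgnChar n w ≠ 0 :=
  Int.cast_ne_zero.2 (Equiv.Perm.sign w).ne_zero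

end EllipticPairing

/-- the radical of the elliptic pairing of S_n equals the span of the
characters induced from proper Young subgroups, and the quotient of the class
functions by the radical has rank 1, spanned by the class of the sign character. -/
theorem statement0 (n : ℕ) (hn : 1 ≤ n) :
    ellRadical n = indSpan n ∧
    sgnChar n ∉ ellRadical n ∧
    ellRadical n ⊔ Submodule.span K {sgnChar n} = classFuns (Equiv.Perm (Fin n)) := by
  obtain ⟨c, hc, -⟩ := (Finset.univ : Finset (Fin n)).exists_cycleOn
  rw [Finset.coe_univ] at hc
  have sgn_ne : (LinearMap.proj c : (Equiv.Perm (Fin n) → K) →ₗ[K] K) (sgnChar n) ≠ 0 :=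
    sgnChar_apply_ne_zero c
  refine ⟨?_, fun h => sgn_ne ((mem_ellRadical_iff.1 h).2 c hc), ?_⟩
  · ext σ
    rw [mem_ellRadical_iff, mem_indSpan_iff]
  · have span_le : Submodule.span K {sgnChar n} ≤ classFuns (Equiv.Perm (Fin n)) :=
      (Submodule.span_singleton_le_iff_mem _ _).2 sgnChar_mem_classFuns
    rw [ellRadical_eq_inf_ker_proj hc, sup_comm, inf_comm, ← sup_inf_assoc_of_le _ span_le,
      LinearMap.span_singleton_sup_ker_eq_top _ sgn_ne, top_inf_eq]
end
end

section
/- For any finite Weyl group W with reflection representation E of dimension l, the elliptic fake degree of the sign character equals (1-q)^l · Π_{i=1}^{l} (1-q^{m_i})/(1-q^{m_i+1}), where m_1,...,m_l are the exponents of W. -/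
set_option maxHeartbeats 1000000
set_option synthInstance.maxHeartbeats 400000

/-!
STATEMENT 4: For a finite Weyl group `W` with reflection representation `E` of
dimension `l` (formalized: a finite group with a faithful rational representation
generated by reflections) whose exponents are `m_1,…,m_l` (formalized via the
Molien/Shephard–Todd identity characterizing the degrees `m_i + 1`), the elliptic
fake degree of the sign character `w ↦ det_E(w)` equals
`(1-q)^l · Π_i (1-q^{m_i})/(1-q^{m_i+1})`.
-/

open scoped BigOperators

noncomputable section

/-- entries of a rational matrix viewed in `K = ℚ(q)`. -/
def mapK {l : ℕ} (M : Matrix (Fin l) (Fin l) ℚ) : Matrix (Fin l) (Fin l) K :=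
  M.map RatFunc.C

/-!
Chevalley and Solomon: read the Molien series of a module as the Hilbert series of its covariants.
The invariant ring is a polynomial ring on fundamental invariants `f i` of degrees `m i + 1`, whose
Jacobian determinant is nonzero. For `f_I = ∏ df i` over `i ∈ I` with `|I| = k`, the `f_I` are
independent covariants of `Λ^k E`, so they give a lower bound for the Hilbert series of these
covariants; pairing with the complementary minors, whose products land in the `det`-covariants,
gives the matching upper bound as soon as `molienSeries det = X ^ ∑ m i * molienSeries 1`. That
identity is the substitution `q ↦ q⁻¹` in the Molien series. Summing over `k` with signs turns
`∑ (-1) ^ k tr Λ^k w` into `det (1 - w)`, and an invariant inner product gives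
`det w * det (1 - w) = (-1) ^ l * det (1 - w)`.
-/

section CompoundMatrix

open Matrix Set.powersetCard

variable {n R S : Type*} [LinearOrder n] [CommRing R] [CommRing S] {k : ℕ}

/-- The `k`-th compound of a square matrix: the matrix of its `k × k` minors, indexed by the
`k`-element subsets of the index type. It is the matrix of the `k`-th exterior power. -/
def compoundMatrix (k : ℕ) (A : Matrix n n R) :
    Matrix (Set.powersetCard n k) (Set.powersetCard n k) R :=
  of fun I J => (A.submatrix (ofFinEmbEquiv.symm I) (ofFinEmbEquiv.symm J)).det

theorem compoundMatrix_map (f : R →+* S) (k : ℕ) (A : Matrix n n R) :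
    compoundMatrix k (A.map f) = (compoundMatrix k A).map f := by
  ext I J
  exact (f.map_det _).symm

theorem compoundMatrix_transpose (k : ℕ) (A : Matrix n n R) :
    compoundMatrix k Aᵀ = (compoundMatrix k A)ᵀ := by
  ext I J
  exact det_transpose _

theorem det_submatrix_ofFinEmbEquiv_symm (A : Matrix n n R) (I : Set.powersetCard n k) :
    (A.submatrix (ofFinEmbEquiv.symm I) (ofFinEmbEquiv.symm I)).det =
      (A.submatrix (Subtype.val : I.1 → n) Subtype.val).det :=
  det_submatrix_equiv_self (I.1.orderIsoOfFin I.2).toEquiv (A.submatrix Subtype.val Subtype.val)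

/-- The matrix obtained from `M` by replacing the rows in `I` by the standard basis vectors
indexed by `J`, in increasing order. -/
def replaceRows (M : Matrix n n R) (I J : Set.powersetCard n k) : Matrix n n R :=
  of (Function.extend (ofFinEmbEquiv.symm I) (fun a => Pi.single (ofFinEmbEquiv.symm J a) 1) M.row)

theorem replaceRows_apply_emb (M : Matrix n n R) (I J : Set.powersetCard n k) (a : Fin k) (j : n) :
    replaceRows M I J (ofFinEmbEquiv.symm I a) j =
      (1 : Matrix n n R) (ofFinEmbEquiv.symm J a) j := by
  rw [replaceRows, of_apply, (ofFinEmbEquiv.symm I).injective.extend_apply, one_eq_pi_single]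

theorem replaceRows_apply_of_notMem (M : Matrix n n R) {I : Set.powersetCard n k}
    (J : Set.powersetCard n k) {i : n} (hi : i ∉ I.1) (j : n) : replaceRows M I J i j = M i j := by
  rw [replaceRows, of_apply, Function.extend_apply' _ _ _
    fun h => hi ((mem_range_ofFinEmbEquiv_symm_iff_mem I i).mp h), row]

theorem replaceRows_map (f : R →+* S) (M : Matrix n n R) (I J : Set.powersetCard n k) :
    replaceRows (M.map f) I J = (replaceRows M I J).map f := by
  ext i j
  by_cases hi : i ∈ I.1
  · obtain ⟨a, rfl⟩ := (mem_range_ofFinEmbEquiv_symm_iff_mem I i).mpr hi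
    simp [replaceRows_apply_emb, one_apply, apply_ite f]
  · simp [replaceRows_apply_of_notMem _ J hi]

variable [Fintype n]

theorem compoundMatrix_eq_toMatrix (k : ℕ) (A : Matrix n n R) :
    compoundMatrix k A = LinearMap.toMatrix ((Pi.basisFun R n).exteriorPower k)
      ((Pi.basisFun R n).exteriorPower k) (exteriorPower.map k (Matrix.toLin' A)) := by
  ext I J
  rw [LinearMap.toMatrix_apply, exteriorPower.basis_repr_apply, exteriorPower.basis_apply,
    exteriorPower.map_apply_ιMulti_family, exteriorPower.ιMulti_family,
    exteriorPower.ιMultiDual_apply_ιMulti, ← det_transpose]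
  simp [compoundMatrix, submatrix, transpose]

theorem compoundMatrix_mul (k : ℕ) (A B : Matrix n n R) :
    compoundMatrix k (A * B) = compoundMatrix k A * compoundMatrix k B := by
  simp only [compoundMatrix_eq_toMatrix, Matrix.toLin'_mul, exteriorPower.map_comp,
    LinearMap.toMatrix_comp _ ((Pi.basisFun R n).exteriorPower k)]

theorem compoundMatrix_one {n : Type*} [LinearOrder n] [Finite n] (k : ℕ) :
    compoundMatrix k (1 : Matrix n n R) = 1 := by
  cases nonempty_fintype n
  rw [compoundMatrix_eq_toMatrix, Matrix.toLin'_one, exteriorPower.map_id, LinearMap.toMatrix_id]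

theorem trace_compoundMatrix (k : ℕ) (A : Matrix n n R) :
    (compoundMatrix k A).trace = ∑ s ∈ Finset.univ.powersetCard k,
      (A.submatrix (Subtype.val : s → n) Subtype.val).det := by
  rw [Finset.sum_subtype (p := (· ∈ Set.powersetCard n k)) (Finset.univ.powersetCard k)
    fun s => by simp [Set.powersetCard.mem_iff]]
  exact Finset.sum_congr rfl fun I _ => det_submatrix_ofFinEmbEquiv_symm A I

theorem det_one_sub_smul_eq_sum_trace_compoundMatrix (t : R) (A : Matrix n n R) :
    (1 - t • A).det =
      ∑ k ∈ Finset.range (Fintype.card n + 1), (-t) ^ k * (compoundMatrix k A).trace := by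
  have h_eval : (1 - t • A).det =
      ((1 + (Polynomial.X : Polynomial R) • A.map Polynomial.C).det).eval (-t) := by
    rw [← Polynomial.coe_evalRingHom, RingHom.map_det]
    congr 1
    ext i j
    by_cases hij : i = j <;> simp [hij, one_apply, sub_eq_add_neg, mul_comm t]
  have h_degree : ((1 + (Polynomial.X : Polynomial R) • A.map Polynomial.C).det).natDegree <
      Fintype.card n + 1 := by
    simpa [add_comm, Nat.lt_succ_iff] using Polynomial.natDegree_det_X_add_C_le A 1
  rw [h_eval, Polynomial.eval_eq_sum_range' h_degree]
  refine Finset.sum_congr rfl fun k _ => ?_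
  rw [coeff_det_one_add_X_smul_eq_sum_minors, trace_compoundMatrix, mul_comm]

theorem det_replaceRows {M M' : Matrix n n R} (h : M * M' = 1) (I J : Set.powersetCard n k) :
    (replaceRows M I J).det = M.det * compoundMatrix k M' J I := by
  set Q := replaceRows M I J * M' with hQ
  have row_mem (a : Fin k) (j : n) :
      Q (ofFinEmbEquiv.symm I a) j = M' (ofFinEmbEquiv.symm J a) j := by
    rw [hQ, mul_apply]
    simp only [replaceRows_apply_emb]
    rw [← mul_apply, one_mul]
  have row_notMem {i : n} (hi : i ∉ I.1) (j : n) : Q i j = (1 : Matrix n n R) i j := by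
    rw [hQ, mul_apply]
    simp only [replaceRows_apply_of_notMem M J hi]
    rw [← mul_apply, h]
  have Q_eq : Q = of (I.1.piecewise Q.row (1 : Matrix n n R).row) := by
    ext i j
    by_cases hi : i ∈ I.1
    · simp [hi]
    · simp [hi, row_notMem hi]
  have det_Q : Q.det = compoundMatrix k M' J I := by
    rw [Q_eq, det_piecewise_one_eq_submatrix_det, ← det_submatrix_ofFinEmbEquiv_symm]
    exact congrArg det (Matrix.ext fun a b => row_mem a _)
  have det_inv : M'.det * M.det = 1 := by rw [mul_comm, ← det_mul, h, det_one]
  rw [hQ, det_mul] at det_Q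
  linear_combination M.det * det_Q - (replaceRows M I J).det * det_inv

/-- The complementary minors of `M`, arranged so that the product with `compoundMatrix k M` is
`det M`: a denominator-free version of `det M • compoundMatrix k M⁻¹`. -/
def cofactorCompound (k : ℕ) (M : Matrix n n R) :
    Matrix (Set.powersetCard n k) (Set.powersetCard n k) R :=
  of fun J I => (replaceRows M I J).det

theorem cofactorCompound_map (f : R →+* S) (k : ℕ) (M : Matrix n n R) :
    cofactorCompound k (M.map f) = (cofactorCompound k M).map f := by
  ext J I
  rw [cofactorCompound, of_apply, replaceRows_map]
  exact (f.map_det _).symm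

theorem cofactorCompound_eq_det_smul {M M' : Matrix n n R} (h : M * M' = 1) (k : ℕ) :
    cofactorCompound k M = M.det • compoundMatrix k M' := by
  ext J I
  exact det_replaceRows h I J

variable [IsDomain R] {M : Matrix n n R}

theorem compoundMatrix_mul_cofactorCompound (h : M.det ≠ 0) (k : ℕ) :
    compoundMatrix k M * cofactorCompound k M = M.det • 1 := by
  set φ := algebraMap R (FractionRing R)
  have φ_injective : Function.Injective φ := FaithfulSMul.algebraMap_injective R (FractionRing R)
  have det_map : (M.map φ).det = φ M.det := (φ.map_det M).symm
  have mul_inv : M.map φ * (M.map φ)⁻¹ = 1 := by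
    refine mul_nonsing_inv _ (IsUnit.mk0 _ ?_)
    rw [det_map]
    exact (map_ne_zero_iff _ φ_injective).mpr h
  apply map_injective φ_injective
  change (compoundMatrix k M * cofactorCompound k M).map φ = (M.det • 1 : Matrix _ _ R).map φ
  rw [Matrix.map_mul, ← compoundMatrix_map, ← cofactorCompound_map,
    cofactorCompound_eq_det_smul mul_inv, Matrix.mul_smul, ← compoundMatrix_mul, mul_inv,
    compoundMatrix_one, det_map]
  ext i j
  simp [one_apply, apply_ite φ]

end CompoundMatrix

section WeightedMonomials

open MvPolynomial

variable {σ R F : Type*}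

/-- The monomials of weighted degree `d`, as a basis of the weighted homogeneous polynomials. -/
def weightedMonomialBasis (R : Type*) [CommSemiring R] (w : σ → ℕ) (d : ℕ) :
    Module.Basis {μ : σ →₀ ℕ | Finsupp.weight w μ = d} R (weightedHomogeneousSubmodule R w d) :=
  (basisRestrictSupport R _).map
    (LinearEquiv.ofEq _ _ (weightedHomogeneousSubmodule_eq_finsupp_supported R w d).symm)

theorem weightedMonomialBasis_repr_apply [CommSemiring R] (w : σ → ℕ) (d : ℕ)
    (p : weightedHomogeneousSubmodule R w d) (μ : {μ : σ →₀ ℕ | Finsupp.weight w μ = d}) :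
    (weightedMonomialBasis R w d).repr p μ = coeff μ.1 p.1 :=
  rfl

theorem coe_weightedMonomialBasis [CommSemiring R] (w : σ → ℕ) (d : ℕ)
    (μ : {μ : σ →₀ ℕ | Finsupp.weight w μ = d}) :
    (weightedMonomialBasis R w d μ : MvPolynomial σ R) = monomial μ.1 1 := by
  classical
  ext ν
  by_cases hν : Finsupp.weight w ν = d
  · rw [← weightedMonomialBasis_repr_apply w d _ ⟨ν, hν⟩, Module.Basis.repr_self, coeff_monomial,
      Finsupp.single_apply]
    simp [Subtype.ext_iff]
  · rw [IsWeightedHomogeneous.coeff_eq_zero (weightedMonomialBasis R w d μ).2 ν hν, coeff_monomial,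
      if_neg (by rintro rfl; exact hν μ.2)]

variable [Fintype σ]

/-- The finitely many exponent vectors of weighted degree `d`, for positive weights. -/
def weightFinset (w : σ → ℕ) (hw : ∀ i, w i ≠ 0) (d : ℕ) : Finset (σ →₀ ℕ) :=
  (Finsupp.finite_of_nat_weight_eq w hw d).toFinset

theorem mem_weightFinset {w : σ → ℕ} (hw : ∀ i, w i ≠ 0) {d : ℕ} {μ : σ →₀ ℕ} :
    μ ∈ weightFinset w hw d ↔ Finsupp.weight w μ = d := by
  simp [weightFinset]

theorem finrank_weightedHomogeneousSubmodule [Field F] (w : σ → ℕ) (hw : ∀ i, w i ≠ 0) (d : ℕ) :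
    Module.finrank F (weightedHomogeneousSubmodule F w d) = (weightFinset w hw d).card := by
  have : Fintype {μ : σ →₀ ℕ | Finsupp.weight w μ = d} :=
    (Finsupp.finite_of_nat_weight_eq w hw d).fintype
  rw [Module.finrank_eq_card_basis (weightedMonomialBasis F w d), weightFinset,
    Set.Finite.card_toFinset]

theorem mk_geometric_mul_one_sub [CommRing R] (c : R) {e : ℕ} (he : e ≠ 0) :
    (PowerSeries.mk fun d => if e ∣ d then c ^ (d / e) else 0) *
      (1 - PowerSeries.C c * PowerSeries.X ^ e) = 1 := by
  ext d
  rw [mul_sub, mul_one, map_sub, ← mul_assoc, PowerSeries.coeff_mul_X_pow', PowerSeries.coeff_mul_C,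
    PowerSeries.coeff_one, PowerSeries.coeff_mk, PowerSeries.coeff_mk]
  rcases lt_or_ge d e with hlt | hle
  · rcases eq_or_ne d 0 with rfl | hd
    · simp [he]
    · simp [hlt.not_ge, hd, Nat.not_dvd_of_pos_of_lt (Nat.pos_of_ne_zero hd) hlt]
  · obtain ⟨d, rfl⟩ := Nat.exists_eq_add_of_le hle
    have hpos : 0 < e := Nat.pos_of_ne_zero he
    by_cases hd : e ∣ d <;> simp [hd, he, Nat.add_div_left _ hpos, pow_succ]

theorem coeff_prod_mk_geometric [CommRing R] (w : σ → ℕ) (hw : ∀ i, w i ≠ 0) (c : σ → R) (d : ℕ) :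
    (∏ i, PowerSeries.mk fun d => if w i ∣ d then c i ^ (d / w i) else 0).coeff d =
      ∑ μ ∈ weightFinset w hw d, ∏ i, c i ^ μ i := by
  classical
  rw [PowerSeries.coeff_prod]
  symm
  refine Finset.sum_of_injOn (fun μ => Finsupp.equivFunOnFinite.symm fun i => w i * μ i) ?_ ?_ ?_ ?_
  · intro μ _ ν _ h
    ext i
    simpa [hw i] using DFunLike.congr_fun h i
  · intro μ hμ
    simpa [Finset.mem_finsuppAntidiag, Finsupp.weight_apply, Finsupp.sum_fintype, mul_comm,
      mem_weightFinset] using hμ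
  · intro β hβ hβ'
    obtain ⟨i, hi⟩ : ∃ i, ¬ w i ∣ β i := by
      by_contra! h_dvd
      choose q hq using h_dvd
      refine hβ' ⟨Finsupp.equivFunOnFinite.symm q, ?_, ?_⟩
      · simpa [mem_weightFinset, Finsupp.weight_apply, Finsupp.sum_fintype,
            Finset.mem_finsuppAntidiag, hq, mul_comm] using hβ
      · ext i
        simp [hq]
    exact Finset.prod_eq_zero (Finset.mem_univ i) (by simp [hi])
  · intro μ _
    simp [fun i => Nat.pos_of_ne_zero (hw i)]

theorem mk_sum_weightFinset_mul_prod [CommRing R] (w : σ → ℕ) (hw : ∀ i, w i ≠ 0) (c : σ → R) :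
    (PowerSeries.mk fun d => ∑ μ ∈ weightFinset w hw d, ∏ i, c i ^ μ i) *
      ∏ i, (1 - PowerSeries.C (c i) * PowerSeries.X ^ w i) = 1 := by
  have h : (PowerSeries.mk fun d => ∑ μ ∈ weightFinset w hw d, ∏ i, c i ^ μ i) =
      ∏ i, PowerSeries.mk fun d => if w i ∣ d then c i ^ (d / w i) else 0 := by
    ext d
    rw [coeff_prod_mk_geometric w hw, PowerSeries.coeff_mk]
  rw [h, ← Finset.prod_mul_distrib]
  exact Finset.prod_eq_one fun i _ => mk_geometric_mul_one_sub (c i) (hw i)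

end WeightedMonomials

section HomogeneousComponent

open MvPolynomial

variable {σ τ R : Type*} [CommSemiring R]

theorem weightedHomogeneousComponent_add_map {w : σ → ℕ} {w' : τ → ℕ}
    {T : MvPolynomial σ R →ₗ[R] MvPolynomial τ R} {e : ℕ}
    (hT : ∀ d p, IsWeightedHomogeneous w p d → IsWeightedHomogeneous w' (T p) (d + e))
    (p : MvPolynomial σ R) (d : ℕ) :
    weightedHomogeneousComponent w' (d + e) (T p) = T (weightedHomogeneousComponent w d p) := by
  induction p using MvPolynomial.induction_on' with
  | monomial μ r =>
    have h_mono := isWeightedHomogeneous_monomial w μ r rfl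
    rw [weightedHomogeneousComponent_of_mem (hT _ _ h_mono),
      weightedHomogeneousComponent_of_mem h_mono, apply_ite T, map_zero]
    simp only [Nat.add_right_cancel_iff]
  | add p q hp hq => rw [map_add, map_add, map_add, map_add, hp, hq]

theorem homogeneousComponent_add_map {T : MvPolynomial σ R →ₗ[R] MvPolynomial τ R} {e : ℕ}
    (hT : ∀ d p, p.IsHomogeneous d → (T p).IsHomogeneous (d + e)) (p : MvPolynomial σ R) (d : ℕ) :
    homogeneousComponent (d + e) (T p) = T (homogeneousComponent d p) :=
  weightedHomogeneousComponent_add_map hT p d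

end HomogeneousComponent

section LinearSubstitution

open MvPolynomial

variable {n R S : Type*} [Fintype n] [CommRing R] [CommRing S]

/-- The action of a matrix on polynomials by linear substitution, sending the variable `X j` to
the linear form `∑ i, A i j • X i` given by the `j`-th column of `A`. -/
def linSubst (A : Matrix n n R) : MvPolynomial n R →ₐ[R] MvPolynomial n R :=
  bind₁ A.transpose.toMvPolynomial

theorem linSubst_X (A : Matrix n n R) (j : n) : linSubst A (X j) = ∑ i, A i j • X i := by
  simp [linSubst, Matrix.toMvPolynomial, smul_eq_C_mul, C_mul_X_eq_monomial]

theorem linSubst_one [DecidableEq n] : linSubst (1 : Matrix n n R) = AlgHom.id R _ := by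
  ext1 j
  simp [linSubst]

theorem linSubst_mul (A B : Matrix n n R) : linSubst (A * B) = (linSubst A).comp (linSubst B) := by
  ext1 j
  simp [linSubst, Matrix.toMvPolynomial_mul]

theorem linSubst_mul_apply (A B : Matrix n n R) (p : MvPolynomial n R) :
    linSubst (A * B) p = linSubst A (linSubst B p) :=
  DFunLike.congr_fun (linSubst_mul A B) p

theorem linSubst_map (φ : R →+* S) (A : Matrix n n R) (p : MvPolynomial n R) :
    linSubst (A.map φ) (p.map φ) = (linSubst A p).map φ := by
  rw [linSubst, linSubst, map_bind₁, ← Matrix.transpose_map]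
  congr! with j
  exact Matrix.toMvPolynomial_map φ _ j

theorem linSubst_diagonal_monomial [DecidableEq n] (c : n → R) (μ : n →₀ ℕ) (r : R) :
    linSubst (Matrix.diagonal c) (monomial μ r) = monomial μ ((∏ i, c i ^ μ i) * r) := by
  have h (j : n) : linSubst (Matrix.diagonal c) (X j) = C (c j) * X j := by
    simp [linSubst_X, Matrix.diagonal_apply, smul_eq_C_mul, ite_smul]
  rw [monomial_eq, monomial_eq, Finsupp.prod_fintype _ _ (fun i => pow_zero (X i)), map_mul,
    map_prod]
  simp only [map_pow, h, mul_pow, Finset.prod_mul_distrib, algHom_C, C_mul, map_prod, algebraMap_eq]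
  ring

theorem isHomogeneous_linSubst (A : Matrix n n R) {p : MvPolynomial n R} {d : ℕ}
    (hp : p.IsHomogeneous d) : (linSubst A p).IsHomogeneous d := by
  simpa [linSubst] using hp.aeval _ A.transpose.toMvPolynomial_isHomogeneous

theorem homogeneousComponent_linSubst (A : Matrix n n R) (p : MvPolynomial n R) (d : ℕ) :
    homogeneousComponent d (linSubst A p) = linSubst A (homogeneousComponent d p) :=
  homogeneousComponent_add_map (T := (linSubst A).toLinearMap) (e := 0)
    (fun _ _ hp => isHomogeneous_linSubst A hp) p d

/-- The action of the matrix `A` on the homogeneous polynomials of degree `d`: the `d`-th symmetric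
power of `A`. -/
def homogMap (d : ℕ) (A : Matrix n n R) : Module.End R (homogeneousSubmodule n R d) :=
  (linSubst A).toLinearMap.restrict fun _ hp => isHomogeneous_linSubst A hp

theorem coe_homogMap (d : ℕ) (A : Matrix n n R) (p : homogeneousSubmodule n R d) :
    (homogMap d A p : MvPolynomial n R) = linSubst A p :=
  rfl

theorem homogMap_one [DecidableEq n] (d : ℕ) : homogMap d (1 : Matrix n n R) = 1 := by
  ext1 p
  exact Subtype.ext (by rw [coe_homogMap, linSubst_one]; rfl)

theorem homogMap_mul (d : ℕ) (A B : Matrix n n R) :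
    homogMap d (A * B) = homogMap d A * homogMap d B := by
  ext1 p
  exact Subtype.ext (linSubst_mul_apply A B p)

theorem trace_homogMap (d : ℕ) (A : Matrix n n R) :
    LinearMap.trace R _ (homogMap d A) =
      ∑ μ ∈ weightFinset (1 : n → ℕ) (fun _ => one_ne_zero) d,
        coeff μ (linSubst A (monomial μ 1)) := by
  classical
  have : Fintype {μ : n →₀ ℕ | Finsupp.weight (1 : n → ℕ) μ = d} :=
    (Finsupp.finite_of_nat_weight_eq 1 (fun _ => one_ne_zero) d).fintype
  let b : Module.Basis _ R (homogeneousSubmodule n R d) := weightedMonomialBasis R 1 d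
  rw [LinearMap.trace_eq_matrix_trace R b, Matrix.trace,
    Finset.sum_subtype _ fun _ => mem_weightFinset _]
  refine Finset.sum_congr rfl fun μ _ => ?_
  rw [Matrix.diag_apply, LinearMap.toMatrix_apply]
  exact congrArg (fun p => coeff μ.1 (linSubst A p)) (coe_weightedMonomialBasis 1 d μ)

theorem trace_homogMap_map (φ : R →+* S) (d : ℕ) (A : Matrix n n R) :
    LinearMap.trace S _ (homogMap d (A.map φ)) = φ (LinearMap.trace R _ (homogMap d A)) := by
  rw [trace_homogMap, trace_homogMap, map_sum]
  refine Finset.sum_congr rfl fun μ _ => ?_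
  rw [← coeff_map, ← linSubst_map, map_monomial, φ.map_one]

theorem trace_homogMap_diagonal [DecidableEq n] (d : ℕ) (c : n → R) :
    LinearMap.trace R _ (homogMap d (Matrix.diagonal c)) =
      ∑ μ ∈ weightFinset (1 : n → ℕ) (fun _ => one_ne_zero) d, ∏ i, c i ^ μ i := by
  rw [trace_homogMap]
  refine Finset.sum_congr rfl fun μ _ => ?_
  rw [linSubst_diagonal_monomial, coeff_monomial, if_pos rfl, mul_one]

end LinearSubstitution

section Molien

variable {n F : Type*} [Fintype n] [DecidableEq n] [Field F]

theorem exists_eq_mul_diagonal_mul_of_pow_eq_one [IsAlgClosed F] {N : ℕ} (hN : (N : F) ≠ 0)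
    {A : Matrix n n F} (hA : A ^ N = 1) :
    ∃ (P Q : Matrix n n F) (c : n → F), Q * P = 1 ∧ A = P * Matrix.diagonal c * Q := by
  set f : Module.End F (n → F) := Matrix.toLin' A
  have f_pow : f ^ N = 1 := by
    rw [← Matrix.toLin'_pow, hA, Matrix.toLin'_one]
    rfl
  have f_semisimple : f.IsSemisimple := by
    refine Module.End.isSemisimple_of_squarefree_aeval_eq_zero
      (p := (Polynomial.X ^ N - 1 : Polynomial F)) ?_ (by simp [f_pow])
    exact (Polynomial.separable_X_pow_sub_C 1 hN one_ne_zero).squarefree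
  set eigenvectors : Set (n → F) := {v | ∃ a : F, f v = a • v}
  have span_eigenvectors : ⊤ ≤ Submodule.span F eigenvectors := by
    rw [← f_semisimple.iSup_eigenspace_eq_top]
    exact iSup_le fun a v hv =>
      Submodule.subset_span ⟨a, Module.End.mem_eigenspace_iff.mp hv⟩
  let b₀ := Module.Basis.ofSpan span_eigenvectors
  let b := b₀.reindex (b₀.indexEquiv (Pi.basisFun F n))
  have b_mem (i : n) : ∃ a : F, f (b i) = a • b i :=
    Module.Basis.ofSpan_subset span_eigenvectors (by simp [b, b₀])
  choose c hc using b_mem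
  refine ⟨(Pi.basisFun F n).toMatrix b, b.toMatrix (Pi.basisFun F n), c,
    Module.Basis.toMatrix_mul_toMatrix_flip _ _, ?_⟩
  have toMatrix_f : LinearMap.toMatrix b b f = Matrix.diagonal c := by
    ext i j
    rw [LinearMap.toMatrix_apply, hc, map_smul, Module.Basis.repr_self]
    by_cases h : i = j
    · simp [h]
    · simp [h]
  rw [← toMatrix_f, basis_toMatrix_mul_linearMap_toMatrix_mul_basis_toMatrix]
  simp [f, LinearMap.toMatrix_eq_toMatrix']

theorem charpolyRev_diagonal {R : Type*} [CommRing R] (c : n → R) :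
    (Matrix.diagonal c).charpolyRev = ∏ i, (1 - Polynomial.C (c i) * Polynomial.X) := by
  rw [Matrix.charpolyRev, ← Matrix.det_diagonal]
  congr 1
  ext i j : 1
  by_cases h : i = j
  · simp [h, Polynomial.X_mul_C]
  · simp [h]

theorem charpolyRev_mul_mul_of_mul_eq_one {R : Type*} [CommRing R] {P Q : Matrix n n R}
    (h : Q * P = 1) (D : Matrix n n R) : (P * D * Q).charpolyRev = D.charpolyRev := by
  rw [← Matrix.reverse_charpoly, Matrix.charpoly_mul_comm, ← mul_assoc, h, one_mul,
    Matrix.reverse_charpoly]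

theorem charpolyRev_map {R S : Type*} [CommRing R] [CommRing S] (φ : R →+* S) (A : Matrix n n R) :
    (A.map φ).charpolyRev = A.charpolyRev.map φ := by
  rw [Matrix.charpolyRev, Matrix.charpolyRev, ← Polynomial.coe_mapRingHom, RingHom.map_det]
  congr 1
  ext i j : 1
  by_cases h : i = j
  · simp [h]
  · simp [h]

theorem mk_trace_homogMap_mul_charpolyRev_of_conj_diagonal {P Q : Matrix n n F} (h : Q * P = 1)
    (c : n → F) :
    (PowerSeries.mk fun d => LinearMap.trace F _ (homogMap d (P * Matrix.diagonal c * Q))) *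
      ((P * Matrix.diagonal c * Q).charpolyRev : PowerSeries F) = 1 := by
  have trace_eq (d : ℕ) : LinearMap.trace F _ (homogMap d (P * Matrix.diagonal c * Q)) =
      ∑ μ ∈ weightFinset (1 : n → ℕ) (fun _ => one_ne_zero) d, ∏ i, c i ^ μ i := by
    rw [homogMap_mul, LinearMap.trace_mul_comm, ← homogMap_mul, ← mul_assoc, h, one_mul,
      trace_homogMap_diagonal]
  simp only [trace_eq]
  rw [charpolyRev_mul_mul_of_mul_eq_one h, charpolyRev_diagonal]
  convert mk_sum_weightFinset_mul_prod (1 : n → ℕ) (fun _ => one_ne_zero) c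
  rw [← Polynomial.coeToPowerSeries.ringHom_apply, map_prod]
  simp

theorem mk_trace_homogMap_mul_charpolyRev [CharZero F] {A : Matrix n n F} {N : ℕ} (hN : N ≠ 0)
    (hA : A ^ N = 1) :
    (PowerSeries.mk fun d => LinearMap.trace F _ (homogMap d A)) *
      (A.charpolyRev : PowerSeries F) = 1 := by
  let φ : F →+* AlgebraicClosure F := algebraMap F (AlgebraicClosure F)
  have hA' : (A.map φ) ^ N = 1 := by
    rw [← RingHom.mapMatrix_apply, ← map_pow, hA, map_one]
  obtain ⟨P, Q, c, hQP, h_conj⟩ := exists_eq_mul_diagonal_mul_of_pow_eq_one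
    (by exact_mod_cast hN) hA'
  have h := mk_trace_homogMap_mul_charpolyRev_of_conj_diagonal hQP c
  rw [← h_conj, charpolyRev_map] at h
  refine PowerSeries.map_injective φ φ.injective ?_
  rw [map_mul, map_one, ← Polynomial.polynomial_map_coe, ← h]
  congr 1
  ext d
  simp [trace_homogMap_map]

end Molien

section Representations

open MvPolynomial
open scoped Matrix

variable {G n ι F : Type*} [Group G] [Fintype n] [DecidableEq n] [Fintype ι] [DecidableEq ι]
  [Field F] (A : G →* Matrix n n F)

/-- The representation on polynomials by linear substitution. -/
def linSubstRep : Representation F G (MvPolynomial n F) where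
  toFun g := (linSubst (A g)).toLinearMap
  map_one' := by
    rw [map_one, linSubst_one]
    rfl
  map_mul' g h := by
    rw [map_mul, linSubst_mul]
    rfl

theorem linSubstRep_apply (g : G) (p : MvPolynomial n F) : linSubstRep A g p = linSubst (A g) p :=
  rfl

/-- The action on homogeneous polynomials of degree `d` twisted by a linear character `χ`, whose
invariants are the `χ⁻¹`-semi-invariants of degree `d`. -/
def twistedRep (χ : G →* F) (d : ℕ) : Representation F G (homogeneousSubmodule n F d) where
  toFun g := χ g • homogMap d (A g)
  map_one' := by simp [homogMap_one]
  map_mul' g h := by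
    rw [map_mul, map_mul, homogMap_mul, smul_mul_smul_comm]

theorem mem_invariants_twistedRep {χ : G →* F} {d : ℕ} {p : homogeneousSubmodule n F d} :
    p ∈ (twistedRep A χ d).invariants ↔ ∀ g, χ g • linSubst (A g) p = p :=
  forall_congr' fun _ => Subtype.ext_iff

/-- The action on vectors of homogeneous polynomials of degree `d` through the entries and through
the matrix representation `σ`; its invariants are the covariants of degree `d`. -/
def covariantRep (σ : G →* Matrix ι ι F) (d : ℕ) :
    Representation F G (ι → homogeneousSubmodule n F d) where
  toFun g := LinearMap.pi fun i => ∑ j, σ g i j • homogMap d (A g) ∘ₗ LinearMap.proj j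
  map_one' := by
    refine LinearMap.ext fun v => funext fun i => ?_
    simp [homogMap_one, Matrix.one_apply]
  map_mul' g h := by
    refine LinearMap.ext fun v => funext fun i => ?_
    simp only [map_mul, homogMap_mul, LinearMap.pi_apply, LinearMap.sum_apply,
      LinearMap.smul_apply, LinearMap.comp_apply, LinearMap.proj_apply, Module.End.mul_apply,
      Matrix.mul_apply, map_sum, map_smul, Finset.smul_sum, Finset.sum_smul, smul_smul]
    exact Finset.sum_comm

theorem covariantRep_apply (σ : G →* Matrix ι ι F) (d : ℕ) (g : G)
    (v : ι → homogeneousSubmodule n F d) (i : ι) :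
    covariantRep A σ d g v i = ∑ j, σ g i j • homogMap d (A g) (v j) := by
  simp [covariantRep]

theorem mem_invariants_covariantRep {σ : G →* Matrix ι ι F} {d : ℕ}
    {v : ι → homogeneousSubmodule n F d} :
    v ∈ (covariantRep A σ d).invariants ↔ ∀ g,
      (fun i => linSubst (A g) (v i)) ᵥ* (σ g).transpose.map C =
        fun i => (v i : MvPolynomial n F) := by
  rw [Representation.mem_invariants]
  refine forall_congr' fun g => funext_iff.trans (Iff.trans (forall_congr' fun i => ?_)
    funext_iff.symm)
  rw [covariantRep_apply, Subtype.ext_iff]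
  simp [coe_homogMap, Matrix.vecMul, dotProduct, smul_eq_C_mul, mul_comm]

instance finite_homogeneousSubmodule {n F : Type*} [Finite n] [Field F] (d : ℕ) :
    Module.Finite F (homogeneousSubmodule n F d) :=
  Module.Finite.iff_fg.mpr (homogeneousSubmodule_fg n F d)

theorem character_twistedRep (χ : G →* F) (d : ℕ) (g : G) :
    (twistedRep A χ d).character g = χ g * LinearMap.trace F _ (homogMap d (A g)) := by
  simp [Representation.character, twistedRep]

theorem character_covariantRep (σ : G →* Matrix ι ι F) (d : ℕ) (g : G) :
    (covariantRep A σ d).character g =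
      (σ g).trace * LinearMap.trace F _ (homogMap d (A g)) := by
  let b := Module.finBasis F (homogeneousSubmodule n F d)
  rw [Representation.character, LinearMap.trace_eq_matrix_trace F (Pi.basis fun _ : ι => b),
    LinearMap.trace_eq_matrix_trace F b]
  simp only [Matrix.trace, Matrix.diag_apply, Fintype.sum_sigma, Finset.sum_mul_sum]
  refine Finset.sum_congr rfl fun i _ => Finset.sum_congr rfl fun a _ => ?_
  rw [LinearMap.toMatrix_apply, LinearMap.toMatrix_apply, Pi.basis_repr, Pi.basis_apply,
    covariantRep_apply, Finset.sum_eq_single_of_mem i (Finset.mem_univ i)]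
  · simp
  · intro j _ hj
    simp [Pi.single_eq_of_ne hj]

end Representations

section MolienSeries

open MvPolynomial
open scoped LaurentSeries RatFunc

variable {G n ι F : Type*} [Group G] [Fintype G] [Fintype n] [DecidableEq n] [Field F]
  (A : G →* Matrix n n F)

/-- Molien's average of `c g / det (1 - X • A g)` over the group, for a weight function `c`. -/
def molienSeries (c : G → F) : RatFunc F :=
  (Fintype.card G : RatFunc F)⁻¹ *
    ∑ g, RatFunc.C (c g) * ((1 : Matrix n n (RatFunc F)) -
      (RatFunc.X : RatFunc F) • (A g).map RatFunc.C).det⁻¹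

theorem algebraMap_charpolyRev (B : Matrix n n F) :
    algebraMap (Polynomial F) (RatFunc F) B.charpolyRev =
      ((1 : Matrix n n (RatFunc F)) - (RatFunc.X : RatFunc F) • B.map RatFunc.C).det := by
  rw [Matrix.charpolyRev, RingHom.map_det]
  congr 1
  ext i j : 1
  by_cases h : i = j <;> simp [h, mul_comm RatFunc.X]

theorem algebraMap_algebraMap_laurentSeries (p : Polynomial F) :
    algebraMap (RatFunc F) F⸨X⸩ (algebraMap (Polynomial F) (RatFunc F) p) =
      HahnSeries.ofPowerSeries ℤ F p :=
  (RatFunc.coe_coe p).symm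

theorem molienSeries_sum_mul {κ : Type*} (s : Finset κ) (a : κ → F) (c : κ → G → F) :
    molienSeries A (fun g => ∑ k ∈ s, a k * c k g) =
      ∑ k ∈ s, RatFunc.C (a k) * molienSeries A (c k) := by
  simp only [molienSeries, map_sum, map_mul, Finset.sum_mul, Finset.mul_sum]
  rw [Finset.sum_comm]
  exact Finset.sum_congr rfl fun k _ => Finset.sum_congr rfl fun g _ => by ring

variable [CharZero F]

theorem algebraMap_inv_det_one_sub_X_smul {B : Matrix n n F} {N : ℕ} (hN : N ≠ 0)
    (hB : B ^ N = 1) :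
    algebraMap (RatFunc F) F⸨X⸩
        ((1 : Matrix n n (RatFunc F)) - (RatFunc.X : RatFunc F) • B.map RatFunc.C).det⁻¹ =
      HahnSeries.ofPowerSeries ℤ F
        (PowerSeries.mk fun d => LinearMap.trace F _ (homogMap d B)) := by
  rw [map_inv₀, ← algebraMap_charpolyRev, algebraMap_algebraMap_laurentSeries]
  refine inv_eq_of_mul_eq_one_left ?_
  rw [← map_mul, mk_trace_homogMap_mul_charpolyRev hN hB, map_one]

theorem algebraMap_molienSeries (c : G → F) :
    algebraMap (RatFunc F) F⸨X⸩ (molienSeries A c) =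
      HahnSeries.ofPowerSeries ℤ F (PowerSeries.mk fun d =>
        (Fintype.card G : F)⁻¹ * ∑ g, c g * LinearMap.trace F _ (homogMap d (A g))) := by
  have h_pow (g : G) : A g ^ Fintype.card G = 1 := by rw [← map_pow, pow_card_eq_one, map_one]
  have h_mk : (PowerSeries.mk fun d =>
      (Fintype.card G : F)⁻¹ * ∑ g, c g * LinearMap.trace F _ (homogMap d (A g))) =
      PowerSeries.C (Fintype.card G : F)⁻¹ * ∑ g, PowerSeries.C (c g) *
        PowerSeries.mk fun d => LinearMap.trace F _ (homogMap d (A g)) := by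
    ext d
    simp
  have h_C (a : F) : algebraMap (RatFunc F) F⸨X⸩ (RatFunc.C a) =
      HahnSeries.ofPowerSeries ℤ F (PowerSeries.C a) := by
    rw [← RatFunc.algebraMap_C, algebraMap_algebraMap_laurentSeries, Polynomial.coe_C]
  rw [h_mk, molienSeries, map_mul, map_mul, map_sum, map_sum, ← h_C, map_inv₀ RatFunc.C,
    map_natCast]
  congr 1
  refine Finset.sum_congr rfl fun g _ => ?_
  rw [map_mul, map_mul, h_C, algebraMap_inv_det_one_sub_X_smul Fintype.card_ne_zero (h_pow g)]

theorem card_inv_mul_sum_character_eq_finrank {V : Type*} [AddCommGroup V] [Module F V]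
    [Module.Finite F V] (π : Representation F G V) :
    (Fintype.card G : F)⁻¹ * ∑ g, π.character g = Module.finrank F π.invariants := by
  have : Invertible (Nat.card G : F) := invertibleOfNonzero (mod_cast Nat.card_pos.ne')
  rw [← Representation.card_inv_mul_sum_char_eq_finrank, Nat.card_eq_fintype_card]

theorem algebraMap_molienSeries_twistedRep (χ : G →* F) :
    algebraMap (RatFunc F) F⸨X⸩ (molienSeries A χ) =
      HahnSeries.ofPowerSeries ℤ F
        (PowerSeries.mk fun d => (Module.finrank F (twistedRep A χ d).invariants : F)) := by
  rw [algebraMap_molienSeries]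
  simp only [← card_inv_mul_sum_character_eq_finrank, character_twistedRep]

theorem algebraMap_molienSeries_covariantRep [Fintype ι] [DecidableEq ι]
    (σ : G →* Matrix ι ι F) :
    algebraMap (RatFunc F) F⸨X⸩ (molienSeries A fun g => (σ g).trace) =
      HahnSeries.ofPowerSeries ℤ F
        (PowerSeries.mk fun d => (Module.finrank F (covariantRep A σ d).invariants : F)) := by
  rw [algebraMap_molienSeries]
  simp only [← card_inv_mul_sum_character_eq_finrank, character_covariantRep]

end MolienSeries

section Averaging

variable {k G V : Type*} [CommRing k] [Group G] [AddCommGroup V] [Module k V]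
  (ρ : Representation k G V) {W : Submodule k V}

theorem representation_apply_sub_mem_of_closure_eq_top (hW : ∀ g, W ≤ W.comap (ρ g)) {S : Set G}
    (hS : Subgroup.closure S = ⊤) {v : V} (hv : ∀ g ∈ S, ρ g v - v ∈ W) (g : G) :
    ρ g v - v ∈ W := by
  have hg : g ∈ Subgroup.closure S := hS ▸ Subgroup.mem_top g
  induction hg using Subgroup.closure_induction with
  | mem g hg => exact hv g hg
  | one => simp
  | mul x y _ _ hx hy =>
    have h : ρ (x * y) v - v = ρ x (ρ y v - v) + (ρ x v - v) := by
      rw [map_mul, Module.End.mul_apply, map_sub, sub_add_sub_cancel]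
    exact h ▸ add_mem (hW x hy) hx
  | inv x _ hx =>
    have h : ρ x⁻¹ v - v = -ρ x⁻¹ (ρ x v - v) := by
      rw [map_sub, Representation.inv_self_apply, neg_sub]
    exact h ▸ neg_mem (hW x⁻¹ hx)

variable [Fintype G] [Invertible (Fintype.card G : k)]

theorem averageMap_apply (v : V) :
    ρ.averageMap v = ⅟(Fintype.card G : k) • ∑ g, ρ g v := by
  simp [GroupAlgebra.average]

theorem averageMap_sub_mem {v : V} (hv : ∀ g, ρ g v - v ∈ W) : ρ.averageMap v - v ∈ W := by
  have h : ρ.averageMap v - v = ⅟(Fintype.card G : k) • ∑ g, (ρ g v - v) := by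
    rw [averageMap_apply, Finset.sum_sub_distrib, smul_sub, Finset.sum_const, Finset.card_univ,
      ← Nat.cast_smul_eq_nsmul k, invOf_smul_smul]
  exact h ▸ W.smul_mem _ (W.sum_mem fun g _ => hv g)

end Averaging

section Reflections

open MvPolynomial

variable {n R : Type*} [Fintype n] [CommRing R]

/-- The linear form with coefficient vector `u`. -/
def linearForm (u : n → R) : MvPolynomial n R :=
  ∑ i, u i • X i

theorem linearForm_ne_zero {u : n → R} (hu : u ≠ 0) : linearForm u ≠ 0 := fun h =>
  hu (funext (Fintype.linearIndependent_iff.mp (linearIndependent_X n R) u h))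

theorem isHomogeneous_linearForm (u : n → R) : (linearForm u).IsHomogeneous 1 :=
  (homogeneousSubmodule n R 1).sum_mem fun i _ =>
    (homogeneousSubmodule n R 1).smul_mem (u i) (isHomogeneous_X R i)

theorem totalDegree_linSubst_le (B : Matrix n n R) (p : MvPolynomial n R) :
    (linSubst B p).totalDegree ≤ p.totalDegree := by
  conv_lhs => rw [← sum_homogeneousComponent p, map_sum]
  refine totalDegree_finsetSum_le fun i hi => ?_
  exact (isHomogeneous_linSubst B (homogeneousComponent_isHomogeneous i p)).totalDegree_le.trans
    (Finset.mem_range_succ_iff.mp hi)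

variable [DecidableEq n]

theorem linearForm_dvd_linSubst_sub (u w : n → R) (p : MvPolynomial n R) :
    linearForm u ∣ linSubst (1 - Matrix.vecMulVec u w) p - p := by
  let π := Ideal.Quotient.mkₐ R (Ideal.span {linearForm u})
  have h_X (j : n) : linSubst (1 - Matrix.vecMulVec u w) (X j) = X j - w j • linearForm u := by
    simp [linSubst_X, linearForm, Matrix.one_apply, Matrix.vecMulVec_apply, sub_smul, ite_smul,
      Finset.smul_sum, smul_smul, mul_comm]
  have h_comp : π.comp (linSubst (1 - Matrix.vecMulVec u w)) = π := by
    ext1 j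
    rw [AlgHom.comp_apply, h_X, map_sub, map_smul, sub_eq_self]
    simp [π]
  rw [← Ideal.mem_span_singleton, ← Ideal.Quotient.mk_eq_mk_iff_sub_mem]
  exact DFunLike.congr_fun h_comp p

theorem exists_eq_vecMulVec_of_rank_eq_one {m n F : Type*} [Fintype n] [Field F]
    {M : Matrix m n F} (hM : M.rank = 1) : ∃ u w, u ≠ 0 ∧ M = Matrix.vecMulVec u w := by
  classical
  obtain ⟨⟨u, _⟩, hu, h_span⟩ := finrank_eq_one_iff'.mp hM
  choose w hw using fun j => h_span ⟨M.mulVec (Pi.single j 1), Pi.single j 1, rfl⟩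
  refine ⟨u, w, fun h => hu (Subtype.ext h), Matrix.ext fun i j => ?_⟩
  have h := congrFun (congrArg Subtype.val (hw j)) i
  simpa [Matrix.vecMulVec_apply, mul_comm] using h.symm

theorem exists_linSubst_sub_eq_mul_of_rank_eq_one {F : Type*} [Field F] {B : Matrix n n F}
    (hB : (1 - B).rank = 1) :
    ∃ L : MvPolynomial n F, L ≠ 0 ∧ ∀ p, ∃ D, linSubst B p - p = L * D ∧
      (D = 0 ∨ D.totalDegree < p.totalDegree) := by
  obtain ⟨u, w, hu, h⟩ := exists_eq_vecMulVec_of_rank_eq_one hB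
  obtain rfl : B = 1 - Matrix.vecMulVec u w := by rw [← h, sub_sub_cancel]
  refine ⟨linearForm u, linearForm_ne_zero hu, fun p => ?_⟩
  obtain ⟨D, hD⟩ := linearForm_dvd_linSubst_sub u w p
  refine ⟨D, hD, or_iff_not_imp_left.mpr fun hD₀ => ?_⟩
  calc D.totalDegree < 1 + D.totalDegree := by lia
    _ = (linearForm u * D).totalDegree := by
      rw [totalDegree_mul_of_isDomain (linearForm_ne_zero hu) hD₀,
        (isHomogeneous_linearForm u).totalDegree (linearForm_ne_zero hu)]
    _ ≤ p.totalDegree := hD ▸ (totalDegree_sub _ _).trans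
      (max_le (totalDegree_linSubst_le _ p) le_rfl)

end Reflections

section Invariants

open MvPolynomial

variable {G n F : Type*} [Group G] [Fintype n] [DecidableEq n] [Field F]
  (A : G →* Matrix n n F)

/-- The algebra of polynomials invariant under the linear substitutions `A g`. -/
def invariantSubalgebra : Subalgebra F (MvPolynomial n F) :=
  ⨅ g, AlgHom.equalizer (linSubst (A g)) (AlgHom.id F _)

/-- The ideal generated by the homogeneous invariants of positive degree. -/
def hilbertIdeal : Ideal (MvPolynomial n F) :=
  Ideal.span {p | p ∈ invariantSubalgebra A ∧ ∃ d ≠ 0, p.IsHomogeneous d}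

variable {A}

theorem mem_invariantSubalgebra {p : MvPolynomial n F} :
    p ∈ invariantSubalgebra A ↔ ∀ g, linSubst (A g) p = p := by
  simp [invariantSubalgebra, Algebra.mem_iInf, AlgHom.mem_equalizer]

theorem mem_invariantSubalgebra_iff_mem_invariants {p : MvPolynomial n F} :
    p ∈ invariantSubalgebra A ↔ p ∈ (linSubstRep A).invariants :=
  mem_invariantSubalgebra

theorem homogeneousComponent_mem_invariantSubalgebra {p : MvPolynomial n F}
    (hp : p ∈ invariantSubalgebra A) (d : ℕ) :
    homogeneousComponent d p ∈ invariantSubalgebra A :=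
  mem_invariantSubalgebra.mpr fun g => by
    rw [← homogeneousComponent_linSubst, mem_invariantSubalgebra.mp hp g]

theorem linSubst_mem_hilbertIdeal (g : G) {p : MvPolynomial n F} (hp : p ∈ hilbertIdeal A) :
    linSubst (A g) p ∈ hilbertIdeal A := by
  have h : hilbertIdeal A ≤ (hilbertIdeal A).comap (linSubst (A g)) := by
    refine Ideal.span_le.mpr fun f hf => ?_
    rw [SetLike.mem_coe, Ideal.mem_comap, mem_invariantSubalgebra.mp hf.1 g]
    exact Ideal.subset_span hf
  exact h hp

theorem sub_C_coeff_zero_mem_hilbertIdeal {p : MvPolynomial n F}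
    (hp : p ∈ invariantSubalgebra A) : p - C (coeff 0 p) ∈ hilbertIdeal A := by
  have h_sum := sum_homogeneousComponent p
  rw [Finset.sum_range_succ', homogeneousComponent_zero] at h_sum
  rw [← eq_sub_of_add_eq h_sum]
  exact Submodule.sum_mem _ fun d _ => Ideal.subset_span
    ⟨homogeneousComponent_mem_invariantSubalgebra hp _, d + 1, d.succ_ne_zero,
      homogeneousComponent_isHomogeneous _ _⟩

theorem coeff_mul_of_coeff_eq_zero {σ R : Type*} [CommSemiring R] {p : MvPolynomial σ R}
    {μ : σ →₀ ℕ}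
    (hp : ∀ ν, ν.degree < μ.degree → coeff ν p = 0) (h : MvPolynomial σ R) :
    coeff μ (h * p) = coeff 0 h * coeff μ p := by
  classical
  rw [coeff_mul, Finset.sum_eq_single_of_mem (0, μ) (by simp)]
  rintro ⟨a, b⟩ hab h_ne
  obtain rfl : a + b = μ := Finset.HasAntidiagonal.mem_antidiagonal.mp hab
  have ha : a.degree ≠ 0 := fun ha => h_ne (by simp [(Finsupp.degree_eq_zero_iff a).mp ha])
  rw [hp b (by rw [map_add]; lia), mul_zero]

variable {ι : Type*} [Fintype ι] {p : ι → MvPolynomial n F} {μ : n →₀ ℕ}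

theorem exists_linSubst_sub_eq_mul_of_sum_mul_eq_zero {g : G} (hg : (1 - A g).rank = 1)
    (hp : ∀ i, p i ∈ invariantSubalgebra A) {h : ι → MvPolynomial n F}
    (h_sum : ∑ i, h i * p i = 0) :
    ∃ (L : MvPolynomial n F) (D : ι → MvPolynomial n F),
      (∀ i, linSubst (A g) (h i) - h i = L * D i) ∧
      (∀ i, D i = 0 ∨ (D i).totalDegree < (h i).totalDegree) ∧ ∑ i, D i * p i = 0 := by
  obtain ⟨L, hL, h_div⟩ := exists_linSubst_sub_eq_mul_of_rank_eq_one hg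
  choose D hD h_lt using fun i => h_div (h i)
  refine ⟨L, D, hD, h_lt, (mul_eq_zero.mp ?_).resolve_left hL⟩
  calc L * ∑ i, D i * p i = linSubst (A g) (∑ i, h i * p i) - ∑ i, h i * p i := by
        simp only [Finset.mul_sum, ← mul_assoc, ← hD, map_sum, map_mul, sub_mul,
          mem_invariantSubalgebra.mp (hp _) g, Finset.sum_sub_distrib]
    _ = 0 := by rw [h_sum, map_zero, sub_zero]

variable [Fintype G] [Invertible (Fintype.card G : F)]

theorem averageMap_mem_invariantSubalgebra (h : MvPolynomial n F) :
    (linSubstRep A).averageMap h ∈ invariantSubalgebra A :=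
  mem_invariantSubalgebra_iff_mem_invariants.mpr (Representation.averageMap_invariant _ h)

theorem averageMap_mul {p : MvPolynomial n F} (hp : p ∈ invariantSubalgebra A)
    (h : MvPolynomial n F) :
    (linSubstRep A).averageMap (h * p) = (linSubstRep A).averageMap h * p := by
  simp only [averageMap_apply, linSubstRep_apply, map_mul, mem_invariantSubalgebra.mp hp,
    smul_mul_assoc, Finset.sum_mul]

theorem averageMap_sum_smul_mem_hilbertIdeal (hp : ∀ i, p i ∈ invariantSubalgebra A)
    (h_low : ∀ i ν, ν.degree < μ.degree → coeff ν (p i) = 0) {h : ι → MvPolynomial n F}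
    (h_sum : ∑ i, h i * p i = 0) :
    (linSubstRep A).averageMap (∑ i, coeff μ (p i) • h i) ∈ hilbertIdeal A := by
  set q := fun i => (linSubstRep A).averageMap (h i) with hq
  have h_coeff : ∑ i, coeff μ (p i) * coeff 0 (q i) = 0 := by
    have h_avg : ∑ i, q i * p i = 0 := by
      simp only [hq, ← averageMap_mul (hp _), ← map_sum, h_sum, map_zero]
    rw [← coeff_zero μ, ← h_avg, coeff_sum]
    exact Finset.sum_congr rfl fun i _ => by
      rw [coeff_mul_of_coeff_eq_zero (h_low i), mul_comm]
  have h_const : ∑ i, coeff μ (p i) • (C (coeff 0 (q i)) : MvPolynomial n F) = 0 := by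
    simp only [smul_eq_C_mul, ← C_mul]
    rw [← map_sum, h_coeff, C_0]
  have h_eq : (linSubstRep A).averageMap (∑ i, coeff μ (p i) • h i) =
      ∑ i, coeff μ (p i) • (q i - C (coeff 0 (q i))) := by
    simp only [smul_sub, Finset.sum_sub_distrib, h_const, sub_zero, map_sum, map_smul]
    rfl
  rw [h_eq]
  exact Submodule.sum_mem _ fun i _ => Submodule.smul_of_tower_mem _ _
    (sub_C_coeff_zero_mem_hilbertIdeal (averageMap_mem_invariantSubalgebra (h i)))

-- Chevalley's key lemma, by induction on the degree of the relation: dividing by a reflecting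
-- linear form yields a relation of smaller degree, so the combination is invariant modulo the
-- ideal; its average lies in the ideal because averaging the relation kills constant terms.
theorem sum_coeff_smul_mem_hilbertIdeal (hA : Subgroup.closure {g | (1 - A g).rank = 1} = ⊤)
    (hp : ∀ i, p i ∈ invariantSubalgebra A)
    (h_low : ∀ i ν, ν.degree < μ.degree → coeff ν (p i) = 0) {h : ι → MvPolynomial n F}
    (h_sum : ∑ i, h i * p i = 0) :
    ∑ i, coeff μ (p i) • h i ∈ hilbertIdeal A := by
  obtain ⟨N, hN⟩ : ∃ N, ∀ i, h i = 0 ∨ (h i).totalDegree < N := by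
    obtain ⟨N, hN⟩ := (Set.finite_range fun i => (h i).totalDegree).bddAbove
    exact ⟨N + 1, fun i => .inr (Nat.lt_succ_of_le (hN ⟨i, rfl⟩))⟩
  induction N generalizing h with
  | zero =>
    have hh (i : ι) : h i = 0 := (hN i).resolve_right (Nat.not_lt_zero _)
    simp [hh]
  | succ N ih =>
    set H := ∑ i, coeff μ (p i) • h i with hH
    have h_refl : ∀ g ∈ {g | (1 - A g).rank = 1}, linSubstRep A g H - H ∈ hilbertIdeal A := by
      intro g hg
      obtain ⟨L, D, hD, h_lt, h_rel⟩ := exists_linSubst_sub_eq_mul_of_sum_mul_eq_zero hg hp h_sum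
      have h_H : linSubstRep A g H - H = L * ∑ i, coeff μ (p i) • D i := by
        simp only [linSubstRep_apply, hH, map_sum, map_smul, Finset.mul_sum, mul_smul_comm, ← hD,
          smul_sub, Finset.sum_sub_distrib]
      rw [h_H]
      refine Ideal.mul_mem_left _ _ (ih h_rel fun i => (h_lt i).imp_right fun h_lt => ?_)
      have h_ne : h i ≠ 0 := fun h₀ => by simp [h₀] at h_lt
      exact h_lt.trans_le (Nat.le_of_lt_succ ((hN i).resolve_left h_ne))
    have h_avg : (linSubstRep A).averageMap H - H ∈ hilbertIdeal A :=
      averageMap_sub_mem _ (W := (hilbertIdeal A).restrictScalars F)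
        (representation_apply_sub_mem_of_closure_eq_top _
          (fun g _ => linSubst_mem_hilbertIdeal g) hA h_refl)
    exact sub_sub_cancel ((linSubstRep A).averageMap H) H ▸
      sub_mem (averageMap_sum_smul_mem_hilbertIdeal hp h_low h_sum) h_avg

end Invariants

section PolynomialLemmas

open MvPolynomial

variable {σ ι R : Type*}

theorem homogeneousComponent_mul_of_isHomogeneous [CommSemiring R] {f : MvPolynomial σ R} {e : ℕ}
    (hf : f.IsHomogeneous e) (q : MvPolynomial σ R) (d : ℕ) :
    homogeneousComponent d (q * f) =
      if e ≤ d then homogeneousComponent (d - e) q * f else 0 := by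
  have h_mul (i : ℕ) (p : MvPolynomial σ R) (hp : p.IsHomogeneous i) :
      (p * f).IsHomogeneous (i + e) := hp.mul hf
  split_ifs with h
  · conv_lhs => rw [← Nat.sub_add_cancel h]
    exact homogeneousComponent_add_map (T := LinearMap.mulRight R f) h_mul q (d - e)
  · rw [← sum_homogeneousComponent q, Finset.sum_mul, map_sum]
    refine Finset.sum_eq_zero fun i _ => ?_
    rw [homogeneousComponent_of_mem (h_mul i _ (homogeneousComponent_isHomogeneous i q)),
      if_neg (by lia)]

theorem isHomogeneous_aeval_of_isWeightedHomogeneous [Finite ι] [CommSemiring R]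
    {f : ι → MvPolynomial σ R} {e : ι → ℕ} (hf : ∀ i, (f i).IsHomogeneous (e i))
    {P : MvPolynomial ι R} {d : ℕ} (hP : P.IsWeightedHomogeneous e d) :
    (aeval f P).IsHomogeneous d := by
  cases nonempty_fintype ι
  rw [aeval_def, eval₂_eq']
  refine IsHomogeneous.sum _ _ _ fun μ hμ => ?_
  have h_weight : 0 + ∑ i, e i * μ i = d := by
    rw [← hP (mem_support_iff.mp hμ), Finsupp.weight_apply, Finsupp.sum_fintype _ _ (by simp)]
    simp [mul_comm]
  exact h_weight ▸ (isHomogeneous_C σ _).mul (IsHomogeneous.prod _ _ _ fun i _ => (hf i).pow (μ i))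

theorem pderiv_aeval [Fintype ι] [CommSemiring R] (f : ι → MvPolynomial σ R) (P : MvPolynomial ι R)
    (k : σ) :
    pderiv k (aeval f P) = ∑ i, pderiv k (f i) * aeval f (pderiv i P) := by
  classical
  induction P using MvPolynomial.induction_on with
  | C a => simp
  | add p q hp hq => simp only [map_add, hp, hq, mul_add, Finset.sum_add_distrib]
  | mul_X p j hp =>
    simp only [map_mul, pderiv_mul, hp, aeval_X, map_add, mul_add, Finset.sum_add_distrib,
      Finset.sum_mul, mul_assoc, pderiv_X, Pi.single_apply]
    simp [mul_comm]

theorem totalDegree_pderiv_lt [CommSemiring R] {p : MvPolynomial σ R} (hp : p.totalDegree ≠ 0)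
    (i : σ) : (pderiv i p).totalDegree < p.totalDegree := by
  refine (Finset.sup_lt_iff (Nat.pos_of_ne_zero hp)).mpr fun μ hμ => ?_
  rw [mem_support_iff, coeff_pderiv] at hμ
  have h := le_totalDegree (mem_support_iff.mpr (left_ne_zero_of_mul hμ))
  rw [Finsupp.sum_add_index' (by simp) (by simp), Finsupp.sum_single_index rfl] at h
  exact h

theorem eq_C_of_forall_pderiv_eq_zero [CommRing R] [IsDomain R] [CharZero R]
    {p : MvPolynomial σ R} (hp : ∀ i, pderiv i p = 0) : p = C (coeff 0 p) := by
  refine totalDegree_eq_zero_iff_eq_C.mp ((totalDegree_eq_zero_iff σ p).mpr fun μ hμ i => ?_)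
  by_contra hi
  have h := congrArg (coeff (μ - Finsupp.single i 1)) (hp i)
  rw [coeff_pderiv, coeff_zero, tsub_add_cancel_of_le (by simpa [Nat.one_le_iff_ne_zero])] at h
  exact (mul_ne_zero (mem_support_iff.mp hμ) (Nat.cast_add_one_ne_zero _)) h

theorem algebraicIndependent_of_aeval_pderiv_eq_zero {F S : Type*} [Field F] [CharZero F]
    [CommRing S] [Nontrivial S] [Algebra F S] {f : ι → S}
    (h : ∀ P : MvPolynomial ι F, aeval f P = 0 → ∀ i, aeval f (pderiv i P) = 0) :
    AlgebraicIndependent F f := by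
  rw [algebraicIndependent_iff]
  intro P hP
  induction hN : P.totalDegree using Nat.strong_induction_on generalizing P with
  | _ N ih =>
    have h_const : P = C (coeff 0 P) := by
      by_cases h₀ : P.totalDegree = 0
      · exact totalDegree_eq_zero_iff_eq_C.mp h₀
      · exact eq_C_of_forall_pderiv_eq_zero fun i =>
          ih _ (hN ▸ totalDegree_pderiv_lt h₀ i) _ (h P hP i) rfl
    rw [h_const, aeval_C, FaithfulSMul.algebraMap_eq_zero_iff] at hP
    rw [h_const, hP, C_0]

end PolynomialLemmas

section FundamentalInvariants

open MvPolynomial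
open scoped LaurentSeries RatFunc

variable {G n ι F : Type*} [Group G] [Fintype n] [DecidableEq n] [Field F]

/-- Basic invariants of a linear group: a minimal family `f` of homogeneous invariants, of positive
degrees `e`, generating the ideal of all invariants without constant term. -/
structure FundamentalInvariants (A : G →* Matrix n n F) (f : ι → MvPolynomial n F) (e : ι → ℕ) :
    Prop where
  degree_ne_zero : ∀ i, e i ≠ 0
  isHomogeneous : ∀ i, (f i).IsHomogeneous (e i)
  mem : ∀ i, f i ∈ invariantSubalgebra A
  span_eq : Ideal.span (Set.range f) = hilbertIdeal A
  notMem_span : ∀ i, f i ∉ Ideal.span (f '' {i}ᶜ)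

theorem exists_fundamentalInvariants (A : G →* Matrix n n F) :
    ∃ (T : Finset (MvPolynomial n F)) (e : T → ℕ),
      FundamentalInvariants A (fun f : T => (f : MvPolynomial n F)) e := by
  classical
  set S := {p | p ∈ invariantSubalgebra A ∧ ∃ d ≠ 0, p.IsHomogeneous d}
  obtain ⟨T, ⟨hTS, hT⟩, h_min⟩ := exists_minimal_of_wellFoundedLT
    (fun T : Finset (MvPolynomial n F) => (T : Set _) ⊆ S ∧ Ideal.span S = Ideal.span T)
    ((Submodule.fg_span_iff_fg_span_finset_subset S).mp (IsNoetherian.noetherian _))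
  choose e he h_homog using fun f : T => (hTS f.2).2
  refine ⟨T, e, he, h_homog, fun f => (hTS f.2).1, ?_, fun f hf => ?_⟩
  · rw [Subtype.range_coe_subtype, Finset.setOfPred_mem, ← hT, hilbertIdeal]
  have h_image : (fun f : T => (f : MvPolynomial n F)) '' {f}ᶜ = (T.erase f : Finset _) := by
    rw [Set.image_compl_eq_range_sdiff_image Subtype.val_injective, Subtype.range_coe_subtype,
      Set.image_singleton, Finset.coe_erase, Finset.setOfPred_mem]
  have h_span : Ideal.span (T : Set (MvPolynomial n F)) = Ideal.span (T.erase f : Finset _) := by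
    refine le_antisymm (Ideal.span_le.mpr fun p hp => ?_)
      (Ideal.span_mono (Finset.coe_subset.mpr (Finset.erase_subset _ _)))
    rw [← h_image]
    by_cases h : p = f
    · exact h ▸ hf
    · exact Ideal.subset_span ⟨⟨p, hp⟩, fun h' => h (congrArg Subtype.val h'), rfl⟩
  have h_le := h_min ⟨(Finset.coe_subset.mpr (Finset.erase_subset _ _)).trans hTS, hT.trans h_span⟩
    (Finset.erase_subset _ _)
  exact Finset.notMem_erase _ _ (h_le f.2)

namespace FundamentalInvariants

variable {A : G →* Matrix n n F} {f : ι → MvPolynomial n F} {e : ι → ℕ}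

-- A relation with an invertible coefficient, read in degree `e i`, would make `f i` redundant.
theorem coeff_zero_eq_zero_of_sum_mul_eq_zero [Fintype ι] (hf : FundamentalInvariants A f e)
    {q : ι → MvPolynomial n F} (hq : ∑ i, q i * f i = 0) (i : ι) : coeff 0 (q i) = 0 := by
  classical
  by_contra h_ne
  have h_mem : q i * f i ∈ Ideal.span (f '' {i}ᶜ) := by
    rw [← Finset.add_sum_erase _ _ (Finset.mem_univ i)] at hq
    rw [eq_neg_of_add_eq_zero_left hq]
    exact neg_mem (Submodule.sum_mem _ fun j hj => Ideal.mul_mem_left _ _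
      (Ideal.subset_span ⟨j, Finset.ne_of_mem_erase hj, rfl⟩))
  have h_component : homogeneousComponent (e i) (q i * f i) ∈ Ideal.span (f '' {i}ᶜ) := by
    refine homogeneousComponent_mem_of_mem ?_ h_mem _
    let := gradedAlgebra (σ := n) (R := F)
    refine Ideal.homogeneous_span _ _ ?_
    rintro _ ⟨j, _, rfl⟩
    exact ⟨e j, hf.isHomogeneous j⟩
  rw [homogeneousComponent_mul_of_isHomogeneous (hf.isHomogeneous i), if_pos le_rfl, Nat.sub_self,
    homogeneousComponent_zero, ← smul_eq_C_mul] at h_component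
  have h_smul := ((Ideal.span (f '' {i}ᶜ)).restrictScalars F).smul_mem_iff (x := f i) h_ne
  exact hf.notMem_span i (h_smul.mp h_component)

theorem eq_zero_of_sum_smul_pderiv_mem [Fintype ι] [CharZero F] (hf : FundamentalInvariants A f e)
    {c : ι → F} (hc : ∀ k, ∑ i, c i • pderiv k (f i) ∈ hilbertIdeal A) : c = 0 := by
  rw [← hf.span_eq] at hc
  choose b hb using fun k => Ideal.mem_span_range_iff_exists_fun.mp (hc k)
  have h_euler : ∑ i, (∑ k, X k * b k i) * f i = ∑ i, C (c i * e i) * f i :=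
    calc ∑ i, (∑ k, X k * b k i) * f i = ∑ k, X k * ∑ i, b k i * f i := by
          simp only [Finset.sum_mul, Finset.mul_sum, mul_assoc]
          exact Finset.sum_comm
      _ = ∑ i, c i • ∑ k, X k * pderiv k (f i) := by
          simp only [hb, Finset.mul_sum, Finset.smul_sum, mul_smul_comm]
          exact Finset.sum_comm
      _ = ∑ i, C (c i * e i) * f i := by
          simp only [(hf.isHomogeneous _).sum_X_mul_pderiv, ← smul_eq_C_mul, mul_smul,
            Nat.cast_smul_eq_nsmul]
  funext i
  have h := hf.coeff_zero_eq_zero_of_sum_mul_eq_zero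
    (q := fun i => ∑ k, X k * b k i - C (c i * e i))
    (by simp only [sub_mul, Finset.sum_sub_distrib, h_euler, sub_self]) i
  have h_coeff (k : n) : coeff 0 (X k * b k i) = 0 := by simp [coeff_X_mul']
  rw [coeff_sub, coeff_sum, Finset.sum_eq_zero fun k _ => h_coeff k, coeff_zero_C, zero_sub,
    neg_eq_zero] at h
  exact (mul_eq_zero.mp h).resolve_right (Nat.cast_ne_zero.mpr (hf.degree_ne_zero i))

theorem aeval_mem_invariantSubalgebra (hf : FundamentalInvariants A f e) (P : MvPolynomial ι F) :
    aeval f P ∈ invariantSubalgebra A := by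
  have h : (aeval f : MvPolynomial ι F →ₐ[F] _).range ≤ invariantSubalgebra A := by
    rw [← Algebra.adjoin_range_eq_range_aeval]
    exact Algebra.adjoin_le (Set.range_subset_iff.mpr hf.mem)
  exact h ⟨P, rfl⟩

variable [CharZero F]

theorem eq_zero_of_sum_pderiv_mul_eq_zero [Finite G] [Fintype ι]
    (hf : FundamentalInvariants A f e)
    (hA : Subgroup.closure {g | (1 - A g).rank = 1} = ⊤) {p : ι → MvPolynomial n F}
    (hp : ∀ i, p i ∈ invariantSubalgebra A) (h_sum : ∀ k, ∑ i, pderiv k (f i) * p i = 0) :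
    p = 0 := by
  by_contra h_ne
  cases nonempty_fintype G
  have : Invertible (Fintype.card G : F) := invertibleOfNonzero (mod_cast Fintype.card_ne_zero)
  obtain ⟨i, hi⟩ := Function.ne_iff.mp h_ne
  obtain ⟨μ₀, hμ₀⟩ := MvPolynomial.ne_zero_iff.mp hi
  obtain ⟨μ, ⟨i, hμ⟩, h_min⟩ := exists_minimalFor_of_wellFoundedLT
    (fun μ => ∃ i, coeff μ (p i) ≠ 0) Finsupp.degree ⟨μ₀, i, hμ₀⟩
  have h_low (j : ι) (ν : n →₀ ℕ) (hν : ν.degree < μ.degree) : coeff ν (p j) = 0 := by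
    by_contra hν'
    exact hν.not_ge (h_min ⟨j, hν'⟩ hν.le)
  exact hμ (congrFun (hf.eq_zero_of_sum_smul_pderiv_mem fun k =>
    sum_coeff_smul_mem_hilbertIdeal hA hp h_low (h_sum k)) i)

theorem algebraicIndependent [Finite G] [Finite ι] (hf : FundamentalInvariants A f e)
    (hA : Subgroup.closure {g | (1 - A g).rank = 1} = ⊤) : AlgebraicIndependent F f := by
  cases nonempty_fintype ι
  exact algebraicIndependent_of_aeval_pderiv_eq_zero fun P hP => congrFun
    (hf.eq_zero_of_sum_pderiv_mul_eq_zero hA (fun i => hf.aeval_mem_invariantSubalgebra _)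
      fun k => by rw [← pderiv_aeval, hP, map_zero])

theorem mem_range_aeval_of_isHomogeneous [Finite G] [Finite ι]
    (hf : FundamentalInvariants A f e) {d : ℕ} {p : MvPolynomial n F}
    (hp : p ∈ invariantSubalgebra A) (hd : p.IsHomogeneous d) :
    p ∈ (aeval f : MvPolynomial ι F →ₐ[F] MvPolynomial n F).range := by
  cases nonempty_fintype G
  cases nonempty_fintype ι
  have : Invertible (Fintype.card G : F) := invertibleOfNonzero (mod_cast Fintype.card_ne_zero)
  induction d using Nat.strong_induction_on generalizing p with
  | _ d ih =>
    by_cases h₀ : d = 0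
    · subst h₀
      rw [totalDegree_eq_zero_iff_eq_C.mp (Nat.le_zero.mp hd.totalDegree_le)]
      exact Subalgebra.algebraMap_mem _ (coeff 0 p)
    have h_mem : p ∈ Ideal.span (Set.range f) := hf.span_eq ▸ Ideal.subset_span ⟨hp, d, h₀, hd⟩
    obtain ⟨b, hb⟩ := Ideal.mem_span_range_iff_exists_fun.mp h_mem
    set q := fun i => (linSubstRep A).averageMap (b i) with hq
    have h_avg : ∑ i, q i * f i = p := by
      simp only [hq, ← averageMap_mul (hf.mem _)]
      rw [← map_sum, hb, Representation.averageMap_id _ _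
        (mem_invariantSubalgebra_iff_mem_invariants.mp hp)]
    rw [← homogeneousComponent_eq_self hd, ← h_avg, map_sum]
    refine Subalgebra.sum_mem _ fun i _ => ?_
    rw [homogeneousComponent_mul_of_isHomogeneous (hf.isHomogeneous i)]
    split_ifs with h_le
    · have h_lt : d - e i < d := Nat.sub_lt (Nat.pos_of_ne_zero h₀)
        (Nat.pos_of_ne_zero (hf.degree_ne_zero i))
      exact Subalgebra.mul_mem _ (ih _ h_lt (homogeneousComponent_mem_invariantSubalgebra
        (averageMap_mem_invariantSubalgebra _) _) (homogeneousComponent_isHomogeneous _ _))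
        ⟨X i, aeval_X f i⟩
    · exact Subalgebra.zero_mem _

theorem finrank_invariants_twistedRep_one [Finite G] [Finite ι] (hf : FundamentalInvariants A f e)
    (hA : Subgroup.closure {g | (1 - A g).rank = 1} = ⊤) (d : ℕ) :
    Module.finrank F (twistedRep A 1 d).invariants =
      Module.finrank F (weightedHomogeneousSubmodule F e d) := by
  have h_image : (twistedRep A 1 d).invariants.map (homogeneousSubmodule n F d).subtype =
      (weightedHomogeneousSubmodule F e d).map
        (aeval f : MvPolynomial ι F →ₐ[F] MvPolynomial n F).toLinearMap := by
    refine le_antisymm ?_ ?_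
    · rintro _ ⟨p, hp, rfl⟩
      have hp' : (p : MvPolynomial n F) ∈ invariantSubalgebra A :=
        mem_invariantSubalgebra.mpr fun g => by
          simpa using (mem_invariants_twistedRep A).mp hp g
      obtain ⟨P, hP⟩ := hf.mem_range_aeval_of_isHomogeneous hp' p.2
      refine ⟨weightedHomogeneousComponent e d P,
        weightedHomogeneousComponent_mem _ _ _, ?_⟩
      have h_aeval (i : ℕ) (P : MvPolynomial ι F) (hP : P.IsWeightedHomogeneous e i) :
          (aeval f P).IsHomogeneous (i + 0) :=
        isHomogeneous_aeval_of_isWeightedHomogeneous hf.isHomogeneous hP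
      rw [← weightedHomogeneousComponent_add_map h_aeval]
      exact (congrArg _ hP).trans (homogeneousComponent_eq_self p.2)
    · rintro _ ⟨P, hP, rfl⟩
      refine ⟨⟨aeval f P, isHomogeneous_aeval_of_isWeightedHomogeneous hf.isHomogeneous hP⟩,
        (mem_invariants_twistedRep A).mpr fun g => ?_, rfl⟩
      simpa using mem_invariantSubalgebra.mp (hf.aeval_mem_invariantSubalgebra P) g
  rw [← Submodule.finrank_map_subtype_eq, h_image]
  exact (Submodule.equivMapOfInjective (aeval f : MvPolynomial ι F →ₐ[F] _).toLinearMap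
    (hf.algebraicIndependent hA) _).finrank_eq.symm

theorem molienSeries_one_mul_prod [Fintype G] [Fintype ι] (hf : FundamentalInvariants A f e)
    (hA : Subgroup.closure {g | (1 - A g).rank = 1} = ⊤) :
    molienSeries A (1 : G →* F) * ∏ i, (1 - RatFunc.X ^ e i) = 1 := by
  apply (algebraMap (RatFunc F) F⸨X⸩).injective
  have h_prod : ∏ i, (1 - RatFunc.X ^ e i : RatFunc F) = algebraMap (Polynomial F) (RatFunc F)
      (∏ i, (1 - Polynomial.X ^ e i)) := by
    simp [map_prod]
  have h_coe : ((∏ i, (1 - Polynomial.X ^ e i) : Polynomial F) : PowerSeries F) =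
      ∏ i, (1 - PowerSeries.X ^ e i) := by
    rw [← Polynomial.coeToPowerSeries.ringHom_apply]
    simp
  have h_genfun := mk_sum_weightFinset_mul_prod e hf.degree_ne_zero (1 : ι → F)
  simp only [Pi.one_apply, one_pow, Finset.prod_const_one, Finset.sum_const, nsmul_one, map_one,
    one_mul] at h_genfun
  rw [map_mul, algebraMap_molienSeries_twistedRep, h_prod, algebraMap_algebraMap_laurentSeries,
    ← map_mul, map_one, h_coe]
  simp only [hf.finrank_invariants_twistedRep_one hA,
    finrank_weightedHomogeneousSubmodule e hf.degree_ne_zero, h_genfun, map_one]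

end FundamentalInvariants

end FundamentalInvariants

section ProductsOfOneSubPowers

open Polynomial

theorem exists_equiv_of_map_univ_eq {ι κ α : Type*} [Fintype ι] [Fintype κ] {a : ι → α} {b : κ → α}
    (h : Finset.univ.val.map a = Finset.univ.val.map b) : ∃ τ : ι ≃ κ, ∀ i, b (τ i) = a i := by
  classical
  have h_fiber (v : α) : Nonempty ({i // a i = v} ≃ {j // b j = v}) := by
    have h_count := congrArg (Multiset.count v) h
    rw [Multiset.count_map, Multiset.count_map] at h_count
    simp only [eq_comm (a := v)] at h_count
    exact Fintype.card_eq.mp (by rwa [Fintype.card_subtype, Fintype.card_subtype])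
  let τ := fun v => (h_fiber v).some
  exact ⟨(Equiv.sigmaFiberEquiv a).symm.trans ((Equiv.sigmaCongrRight τ).trans
    (Equiv.sigmaFiberEquiv b)), fun i => (τ (a i) ⟨i, rfl⟩).2⟩

variable {F : Type*} [Field F]

theorem aeval_prod_map_one_sub_X_pow_eq_zero_iff {R : Type*} [CommRing R] [IsDomain R] [Algebra F R]
    {s : Multiset ℕ} {z : R} :
    aeval z (s.map fun e => (1 - X ^ e : F[X])).prod = 0 ↔ ∃ e ∈ s, z ^ e = 1 := by
  simp [map_multiset_prod, Multiset.prod_eq_zero_iff, sub_eq_zero (a := (1 : R)),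
    eq_comm (a := (1 : R))]

variable [CharZero F]

theorem exists_mem_dvd_of_prod_map_one_sub_X_pow_eq {s t : Multiset ℕ}
    (h : (s.map fun e => (1 - X ^ e : F[X])).prod = (t.map fun e => (1 - X ^ e : F[X])).prod)
    {N : ℕ} (hN : N ≠ 0) (hs : N ∈ s) : ∃ e ∈ t, N ∣ e := by
  have : NeZero N := ⟨hN⟩
  obtain ⟨z, hz⟩ := HasEnoughRootsOfUnity.exists_primitiveRoot (AlgebraicClosure F) N
  obtain ⟨e, he, hze⟩ := aeval_prod_map_one_sub_X_pow_eq_zero_iff.mp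
    (h ▸ aeval_prod_map_one_sub_X_pow_eq_zero_iff.mpr ⟨N, hs, hz.pow_eq_one⟩)
  exact ⟨e, he, hz.dvd_of_pow_eq_one e hze⟩

theorem eq_of_prod_map_one_sub_X_pow_eq {s t : Multiset ℕ} (hs : 0 ∉ s) (ht : 0 ∉ t)
    (h : (s.map fun e => (1 - X ^ e : F[X])).prod = (t.map fun e => (1 - X ^ e : F[X])).prod) :
    s = t := by
  have h_ne {e : ℕ} {u : Multiset ℕ} (hu : 0 ∉ u) (he : e ∈ u) : e ≠ 0 := ne_of_mem_of_not_mem he hu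
  induction hc : Multiset.card s generalizing s t with
  | zero =>
    rw [Multiset.card_eq_zero.mp hc] at h ⊢
    refine (Multiset.eq_zero_of_forall_notMem fun e he => ?_).symm
    obtain ⟨_, h_mem, _⟩ := exists_mem_dvd_of_prod_map_one_sub_X_pow_eq h.symm (h_ne ht he) he
    exact Multiset.notMem_zero _ h_mem
  | succ k ih =>
    have hs₀ : s ≠ 0 := Multiset.card_pos.mp (by lia)
    obtain ⟨a, ha, h_max⟩ := Multiset.exists_max_image id hs₀
    obtain ⟨b, hb, hab⟩ := exists_mem_dvd_of_prod_map_one_sub_X_pow_eq h (h_ne hs ha) ha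
    obtain ⟨c, hc', hbc⟩ := exists_mem_dvd_of_prod_map_one_sub_X_pow_eq h.symm (h_ne ht hb) hb
    obtain rfl : a = b := le_antisymm (Nat.le_of_dvd (Nat.pos_of_ne_zero (h_ne ht hb)) hab)
      ((Nat.le_of_dvd (Nat.pos_of_ne_zero (h_ne hs hc')) hbc).trans (h_max c hc'))
    obtain ⟨s, rfl⟩ := Multiset.exists_cons_of_mem ha
    obtain ⟨t, rfl⟩ := Multiset.exists_cons_of_mem hb
    have ha₀ : (1 - X ^ a : F[X]) ≠ 0 := by
      rw [← neg_ne_zero, neg_sub]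
      exact X_pow_sub_C_ne_zero (Nat.pos_of_ne_zero (h_ne hs ha)) 1
    rw [Multiset.map_cons, Multiset.map_cons, Multiset.prod_cons, Multiset.prod_cons] at h
    rw [ih (fun h₀ => hs (Multiset.mem_cons_of_mem h₀)) (fun h₀ => ht (Multiset.mem_cons_of_mem h₀))
      (mul_left_cancel₀ ha₀ h) (by simpa using hc)]

theorem exists_equiv_of_prod_one_sub_X_pow_eq {ι κ : Type*} [Fintype ι] [Fintype κ] {a : ι → ℕ}
    {b : κ → ℕ} (ha : ∀ i, a i ≠ 0) (hb : ∀ j, b j ≠ 0)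
    (h : ∏ i, (1 - X ^ a i : F[X]) = ∏ j, (1 - X ^ b j)) : ∃ τ : ι ≃ κ, ∀ i, b (τ i) = a i := by
  refine exists_equiv_of_map_univ_eq (eq_of_prod_map_one_sub_X_pow_eq (F := F) ?_ ?_ ?_)
  · simpa using ha
  · simpa using hb
  · rw [Multiset.map_map, Multiset.map_map]
    exact h

end ProductsOfOneSubPowers

section FundamentalDegrees

open MvPolynomial

variable {G n ι κ F : Type*} [Group G] [Fintype n] [DecidableEq n] [Field F]
  {A : G →* Matrix n n F}

theorem FundamentalInvariants.comp_equiv {f : ι → MvPolynomial n F} {e : ι → ℕ}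
    (hf : FundamentalInvariants A f e) (τ : κ ≃ ι) : FundamentalInvariants A (f ∘ τ) (e ∘ τ) where
  degree_ne_zero i := hf.degree_ne_zero (τ i)
  isHomogeneous i := hf.isHomogeneous (τ i)
  mem i := hf.mem (τ i)
  span_eq := by rw [τ.surjective.range_comp, hf.span_eq]
  notMem_span i := by
    rw [Set.image_comp, Set.image_compl_eq τ.bijective, Set.image_singleton]
    exact hf.notMem_span (τ i)

theorem exists_fundamentalInvariants_of_molienSeries_eq [Fintype G] [Fintype κ] [CharZero F]
    (hA : Subgroup.closure {g | (1 - A g).rank = 1} = ⊤) {d : κ → ℕ} (hd : ∀ i, d i ≠ 0)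
    (h : molienSeries A (1 : G →* F) = ∏ i, (1 - RatFunc.X ^ d i)⁻¹) :
    ∃ f : κ → MvPolynomial n F, FundamentalInvariants A f d := by
  obtain ⟨T, e, he⟩ := exists_fundamentalInvariants A
  have h_mul := he.molienSeries_one_mul_prod hA
  rw [h, Finset.prod_inv_distrib] at h_mul
  have h_prod : ∏ i, (1 - Polynomial.X ^ d i : Polynomial F) = ∏ i, (1 - Polynomial.X ^ e i) := by
    apply RatFunc.algebraMap_injective F
    simpa [map_prod] using (eq_of_inv_mul_eq_one h_mul)
  obtain ⟨τ, hτ⟩ := exists_equiv_of_prod_one_sub_X_pow_eq hd he.degree_ne_zero h_prod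
  exact ⟨_, (funext hτ : e ∘ τ = d) ▸ he.comp_equiv τ⟩

end FundamentalDegrees

section ScalarProducts

variable {ι R : Type*} [Fintype ι] [DecidableEq ι] [CommRing R] [IsDomain R] {M N : Matrix ι ι R}
  {c : R}

theorem det_mul_det_ne_zero_of_mul_eq_smul_one (hc : c ≠ 0) (h : M * N = c • 1) :
    M.det * N.det ≠ 0 := by
  rw [← Matrix.det_mul, h, Matrix.det_smul, Matrix.det_one, mul_one]
  exact pow_ne_zero _ hc

theorem linearIndependent_rows_of_mul_eq_smul_one (hc : c ≠ 0) (h : M * N = c • 1) :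
    LinearIndependent R M.row ∧ LinearIndependent R N.row := by
  have h_det := mul_ne_zero_iff.mp (det_mul_det_ne_zero_of_mul_eq_smul_one hc h)
  exact ⟨Matrix.linearIndependent_rows_of_det_ne_zero h_det.1,
    Matrix.linearIndependent_rows_of_det_ne_zero h_det.2⟩

theorem mul_eq_smul_one_comm (hc : c ≠ 0) (h : M * N = c • 1) : N * M = c • 1 := by
  have h_det : M.det ≠ 0 := (mul_ne_zero_iff.mp (det_mul_det_ne_zero_of_mul_eq_smul_one hc h)).1
  refine smul_right_injective _ h_det ?_
  calc M.det • (N * M) = M.adjugate * (M * N) * M := by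
        rw [← Matrix.mul_assoc, Matrix.adjugate_mul, Matrix.smul_mul, Matrix.one_mul,
          Matrix.smul_mul]
    _ = M.det • c • 1 := by
        rw [h, Matrix.mul_smul, Matrix.mul_one, Matrix.smul_mul, Matrix.adjugate_mul, smul_comm]

end ScalarProducts

section CovariantMatrices

open MvPolynomial
open scoped Matrix

variable {G n ι κ F : Type*} [Group G] [Fintype n] [DecidableEq n] [Fintype ι] [DecidableEq ι]
  [Field F] {A : G →* Matrix n n F} {σ : G →* Matrix ι ι F}

variable (A σ) in
/-- Every row of `M` is a `σ`-covariant for the action of `G` on polynomials through `A`, in the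
sense of `mem_invariants_covariantRep`. -/
def HasCovariantRows (M : Matrix κ ι (MvPolynomial n F)) : Prop :=
  ∀ g, M.map (linSubst (A g)) * (σ g).transpose.map (C : F →+* MvPolynomial n F) = M

theorem prod_linSubst_mem_invariantSubalgebra [Fintype G] (p : MvPolynomial n F) :
    ∏ g, linSubst (A g) p ∈ invariantSubalgebra A := by
  refine mem_invariantSubalgebra.mpr fun g => ?_
  rw [map_prod]
  exact Fintype.prod_equiv (Equiv.mulLeft g) _ _ fun x => by
    rw [Equiv.coe_mulLeft, map_mul, linSubst_mul_apply]

theorem linSubst_ne_zero (g : G) {p : MvPolynomial n F} (hp : p ≠ 0) : linSubst (A g) p ≠ 0 := by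
  intro h
  have h_inv := linSubst_mul_apply (A g⁻¹) (A g) p
  rw [h, map_zero, ← map_mul, inv_mul_cancel, map_one, linSubst_one] at h_inv
  exact hp h_inv

namespace HasCovariantRows

variable {M : Matrix κ ι (MvPolynomial n F)}

theorem submatrix {κ' : Type*} (hM : HasCovariantRows A σ M) (r : κ' → κ) :
    HasCovariantRows A σ (M.submatrix r id) := fun g =>
  congrArg (fun N => Matrix.submatrix N r id) (hM g)

theorem linSubst_vecMul [Fintype κ] (hM : HasCovariantRows A σ M) (p : κ → MvPolynomial n F)
    (g : G) :
    (fun i => linSubst (A g) ((p ᵥ* M) i)) ᵥ* (σ g).transpose.map C =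
      (fun i => linSubst (A g) (p i)) ᵥ* M := by
  have h : (fun i => linSubst (A g) ((p ᵥ* M) i)) =
      (fun i => linSubst (A g) (p i)) ᵥ* M.map (linSubst (A g)) :=
    funext ((linSubst (A g)).toRingHom.map_vecMul M p)
  rw [h, Matrix.vecMul_vecMul, hM g]

theorem averageMap_vecMul_eq_zero [Fintype G] [Invertible (Fintype.card G : F)] [Fintype κ]
    (hM : HasCovariantRows A σ M) {p : κ → MvPolynomial n F} (hp : p ᵥ* M = 0) :
    (fun i => (linSubstRep A).averageMap (p i)) ᵥ* M = 0 := by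
  have h_conj (g : G) : (fun i => linSubst (A g) (p i)) ᵥ* M = 0 := by
    rw [← hM.linSubst_vecMul p g, hp]
    simp only [Pi.zero_apply, map_zero]
    exact Matrix.zero_vecMul _
  have h_sum : (fun i => (linSubstRep A).averageMap (p i)) =
      ⅟(Fintype.card G : F) • ∑ g, fun i => linSubst (A g) (p i) := by
    ext1 i
    rw [averageMap_apply, Pi.smul_apply, Finset.sum_apply]
    rfl
  rw [h_sum, Matrix.smul_vecMul, Matrix.sum_vecMul, Finset.sum_eq_zero fun g _ => h_conj g,
    smul_zero]

theorem vecMul_mem_invariants [Fintype κ] {d : ℕ} (hM : HasCovariantRows A σ M)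
    {p : κ → MvPolynomial n F} (hp : ∀ i, p i ∈ invariantSubalgebra A)
    (h_deg : ∀ j, ((p ᵥ* M) j).IsHomogeneous d) :
    (fun j => ⟨(p ᵥ* M) j, h_deg j⟩ : ι → homogeneousSubmodule n F d) ∈
      (covariantRep A σ d).invariants := by
  refine (mem_invariants_covariantRep A).mpr fun g => ?_
  rw [hM.linSubst_vecMul p g]
  simp only [mem_invariantSubalgebra.mp (hp _) g]

theorem sum_finrank_invariants_le [Fintype κ] (hM : HasCovariantRows A σ M) {d : ℕ}
    {r e : κ → ℕ} (h_deg : ∀ i j, (M i j).IsHomogeneous (r i)) (hr : ∀ i, e i + r i = d)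
    (h_ind : LinearIndependent (MvPolynomial n F) M.row) :
    ∑ i, Module.finrank F (twistedRep A 1 (e i)).invariants ≤
      Module.finrank F (covariantRep A σ d).invariants := by
  have h_mem (p : ∀ i, (twistedRep A 1 (e i)).invariants) (i : κ) :
      (p i : MvPolynomial n F) ∈ invariantSubalgebra A :=
    mem_invariantSubalgebra.mpr fun g => by simpa using (mem_invariants_twistedRep A).mp (p i).2 g
  have h_hom (p : ∀ i, (twistedRep A 1 (e i)).invariants) (j : ι) :
      (((fun i => (p i : MvPolynomial n F)) ᵥ* M) j).IsHomogeneous d :=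
    IsHomogeneous.sum _ _ _ fun i _ => hr i ▸ (p i).1.2.mul (h_deg i j)
  let T : (∀ i, (twistedRep A 1 (e i)).invariants) →ₗ[F] (covariantRep A σ d).invariants :=
    { toFun := fun p => ⟨_, hM.vecMul_mem_invariants (h_mem p) (h_hom p)⟩
      map_add' := fun p q => by
        ext j : 3
        exact congrFun (Matrix.add_vecMul M _ _) j
      map_smul' := fun c p => by
        ext j : 3
        exact congrFun (Matrix.smul_vecMul c _ M) j }
  rw [← Module.finrank_pi_fintype]
  refine LinearMap.finrank_le_finrank_of_injective (f := T) fun p q hpq => ?_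
  have h_eq : (fun i => (p i : MvPolynomial n F)) ᵥ* M = (fun i => (q i : MvPolynomial n F)) ᵥ* M :=
    funext fun j =>
      congrArg (fun v => ((v.1 j : homogeneousSubmodule n F d) : MvPolynomial n F)) hpq
  ext i : 3
  exact congrFun (Matrix.vecMul_injective_iff.mpr h_ind h_eq) i

theorem smul_linSubst_det {M : Matrix ι ι (MvPolynomial n F)} (hM : HasCovariantRows A σ M)
    (g : G) :
    (σ g).det • linSubst (A g) M.det = M.det := by
  have h_map : (M.map (linSubst (A g))).det = linSubst (A g) M.det :=
    ((linSubst (A g)).map_det M).symm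
  have h_C : ((σ g).transpose.map C).det = (C (σ g).det : MvPolynomial n F) :=
    (Matrix.det_transpose (σ g) ▸ (C.map_det (σ g).transpose).symm)
  conv_rhs => rw [← hM g, Matrix.det_mul, h_map, h_C, mul_comm, ← smul_eq_C_mul]

theorem det_ne_zero [Finite G] [CharZero F] {M : Matrix ι ι (MvPolynomial n F)}
    (hM : HasCovariantRows A σ M)
    (h_ker : ∀ p, (∀ i, p i ∈ invariantSubalgebra A) → p ᵥ* M = 0 → p = 0) : M.det ≠ 0 := by
  intro h_det
  cases nonempty_fintype G
  have : Invertible (Fintype.card G : F) := invertibleOfNonzero (mod_cast Fintype.card_ne_zero)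
  obtain ⟨v, hv, hvM⟩ := Matrix.exists_vecMul_eq_zero_iff.mpr h_det
  obtain ⟨i, hi⟩ := Function.ne_iff.mp hv
  classical
  -- Rescale `v` so that its `i`-th entry becomes the norm of `v i`, which averaging does not kill.
  obtain ⟨c, hc⟩ : v i ∣ ∏ g, linSubst (A g) (v i) := by
    simpa [linSubst_one] using
      Finset.dvd_prod_of_mem (fun g => linSubst (A g) (v i)) (Finset.mem_univ 1)
  have h_norm : (linSubstRep A).averageMap (v i * c) = v i * c :=
    Representation.averageMap_id _ _
      (mem_invariantSubalgebra.mp (hc ▸ prod_linSubst_mem_invariantSubalgebra (v i)))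
  have h_zero : (fun j => v j * c) ᵥ* M = 0 := by
    rw [show (fun j => v j * c) = c • v from funext fun j => mul_comm _ _, Matrix.smul_vecMul, hvM,
      smul_zero]
  have h_prod := congrFun (h_ker _ (fun j => averageMap_mem_invariantSubalgebra _)
    (hM.averageMap_vecMul_eq_zero h_zero)) i
  rw [h_norm, ← hc] at h_prod
  exact Finset.prod_ne_zero_iff.mpr (fun g _ => linSubst_ne_zero g hi) h_prod

theorem smul_linSubst_eq_self_of_vecMul_eq_smul [Fintype κ] (hM : HasCovariantRows A σ M)
    (h_ind : LinearIndependent (MvPolynomial n F) M.row) {χ : G →* F} {δ : MvPolynomial n F}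
    (hδ : ∀ g, χ g • linSubst (A g) δ = δ) {d : ℕ} {v : ι → homogeneousSubmodule n F d}
    (hv : v ∈ (covariantRep A σ d).invariants) {b : κ → MvPolynomial n F}
    (hb : b ᵥ* M = fun j => δ * v j) (g : G) (i : κ) : χ g • linSubst (A g) (b i) = b i := by
  have h_eq : (χ g • fun i => linSubst (A g) (b i)) ᵥ* M = b ᵥ* M := by
    calc (χ g • fun i => linSubst (A g) (b i)) ᵥ* M
        = χ g • (linSubst (A g) δ • fun j => linSubst (A g) (v j)) ᵥ* (σ g).transpose.map C := by
          rw [Matrix.smul_vecMul, ← hM.linSubst_vecMul, hb]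
          simp only [map_mul]
          rfl
      _ = b ᵥ* M := by
          rw [Matrix.smul_vecMul, (mem_invariants_covariantRep A).mp hv g, ← smul_assoc, hδ, hb]
          rfl
  exact congrFun (Matrix.vecMul_injective_iff.mpr h_ind h_eq) i

theorem finrank_invariants_le_sum {M N : Matrix ι ι (MvPolynomial n F)}
    (hM : HasCovariantRows A σ M) {δ : MvPolynomial n F} (hδ₀ : δ ≠ 0) (h_mul : M * N = δ • 1)
    {χ : G →* F} (hδ : ∀ g, χ g • linSubst (A g) δ = δ) {s : ι → ℕ}
    (h_deg : ∀ i j, (N i j).IsHomogeneous (s j)) (d : ℕ) :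
    Module.finrank F (covariantRep A σ d).invariants ≤
      ∑ i, Module.finrank F (twistedRep A χ (d + s i)).invariants := by
  obtain ⟨hM_ind, hN_ind⟩ := linearIndependent_rows_of_mul_eq_smul_one hδ₀ h_mul
  have h_mem (v : (covariantRep A σ d).invariants) (i : ι) :
      (⟨((fun j => (v.1 j : MvPolynomial n F)) ᵥ* N) i, IsHomogeneous.sum _ _ _ fun j _ =>
        (v.1 j).2.mul (h_deg j i)⟩ : homogeneousSubmodule n F (d + s i)) ∈
        (twistedRep A χ (d + s i)).invariants := by
    refine (mem_invariants_twistedRep A).mpr fun g => ?_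
    refine hM.smul_linSubst_eq_self_of_vecMul_eq_smul hM_ind hδ v.2 ?_ g i
    rw [Matrix.vecMul_vecMul, mul_eq_smul_one_comm hδ₀ h_mul, Matrix.vecMul_smul, Matrix.vecMul_one]
    rfl
  let T : (covariantRep A σ d).invariants →ₗ[F] ∀ i, (twistedRep A χ (d + s i)).invariants :=
    { toFun := fun v i => ⟨_, h_mem v i⟩
      map_add' := fun v w => by
        ext i : 3
        exact congrFun (Matrix.add_vecMul N _ _) i
      map_smul' := fun c v => by
        ext i : 3
        exact congrFun (Matrix.smul_vecMul c _ N) i }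
  rw [← Module.finrank_pi_fintype]
  refine LinearMap.finrank_le_finrank_of_injective (f := T) fun v w hvw => ?_
  have h_eq : (fun j => (v.1 j : MvPolynomial n F)) ᵥ* N =
      (fun j => (w.1 j : MvPolynomial n F)) ᵥ* N :=
    funext fun i => congrArg (fun p => ((p i).1 : MvPolynomial n F)) hvw
  ext j : 3
  exact congrFun (Matrix.vecMul_injective_iff.mpr hN_ind h_eq) j

end HasCovariantRows

section Squeeze

open scoped LaurentSeries RatFunc

variable [Fintype G] [CharZero F]

theorem algebraMap_X_pow_mul_molienSeries_one (D : ℕ) :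
    algebraMap (RatFunc F) F⸨X⸩ (RatFunc.X ^ D * molienSeries A (1 : G →* F)) =
      HahnSeries.ofPowerSeries ℤ F (PowerSeries.X ^ D *
        PowerSeries.mk fun d => (Module.finrank F (twistedRep A 1 d).invariants : F)) := by
  rw [map_mul, algebraMap_molienSeries_twistedRep, ← RatFunc.algebraMap_X, ← map_pow,
    algebraMap_algebraMap_laurentSeries, map_mul]
  simp

theorem finrank_invariants_twistedRep_of_molienSeries_eq {χ : G →* F} {D : ℕ}
    (hχ : molienSeries A χ = RatFunc.X ^ D * molienSeries A (1 : G →* F)) (d : ℕ) :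
    Module.finrank F (twistedRep A χ d).invariants =
      if D ≤ d then Module.finrank F (twistedRep A 1 (d - D)).invariants else 0 := by
  have h := congrArg (algebraMap (RatFunc F) F⸨X⸩) hχ
  rw [algebraMap_molienSeries_twistedRep, algebraMap_X_pow_mul_molienSeries_one] at h
  have h_coeff := congrArg (PowerSeries.coeff d) (HahnSeries.ofPowerSeries_injective h)
  rw [PowerSeries.coeff_mk, PowerSeries.coeff_X_pow_mul', PowerSeries.coeff_mk] at h_coeff
  exact_mod_cast h_coeff

theorem HasCovariantRows.finrank_invariants_covariantRep {M N : Matrix ι ι (MvPolynomial n F)}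
    (hM : HasCovariantRows A σ M) {δ : MvPolynomial n F} (hδ₀ : δ ≠ 0) (h_mul : M * N = δ • 1)
    {χ : G →* F} (hδ : ∀ g, χ g • linSubst (A g) δ = δ) {r s : ι → ℕ} {D : ℕ}
    (hM_deg : ∀ i j, (M i j).IsHomogeneous (r i)) (hN_deg : ∀ i j, (N i j).IsHomogeneous (s j))
    (hrs : ∀ i, r i + s i = D)
    (hχ : molienSeries A χ = RatFunc.X ^ D * molienSeries A (1 : G →* F)) (d : ℕ) :
    Module.finrank F (covariantRep A σ d).invariants =
      ∑ i, if r i ≤ d then Module.finrank F (twistedRep A 1 (d - r i)).invariants else 0 := by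
  apply le_antisymm
  · refine (hM.finrank_invariants_le_sum hδ₀ h_mul hδ hN_deg d).trans_eq
      (Finset.sum_congr rfl fun i _ => ?_)
    rw [finrank_invariants_twistedRep_of_molienSeries_eq hχ, ← hrs i, Nat.add_sub_add_right]
    simp only [add_le_add_iff_right]
  · have h_ind := (linearIndependent_rows_of_mul_eq_smul_one hδ₀ h_mul).1
    have h_le := (hM.submatrix ((↑) : {i // r i ≤ d} → ι)).sum_finrank_invariants_le
      (e := fun i => d - r i) (fun i j => hM_deg i j) (fun i => Nat.sub_add_cancel i.2)
      (h_ind.comp _ Subtype.val_injective)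
    rwa [← Finset.sum_filter, Finset.sum_subtype _ fun i => Finset.mem_filter_univ i]

theorem HasCovariantRows.molienSeries_trace {M N : Matrix ι ι (MvPolynomial n F)}
    (hM : HasCovariantRows A σ M) {δ : MvPolynomial n F} (hδ₀ : δ ≠ 0) (h_mul : M * N = δ • 1)
    {χ : G →* F} (hδ : ∀ g, χ g • linSubst (A g) δ = δ) {r s : ι → ℕ} {D : ℕ}
    (hM_deg : ∀ i j, (M i j).IsHomogeneous (r i)) (hN_deg : ∀ i j, (N i j).IsHomogeneous (s j))
    (hrs : ∀ i, r i + s i = D)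
    (hχ : molienSeries A χ = RatFunc.X ^ D * molienSeries A (1 : G →* F)) :
    molienSeries A (fun g => (σ g).trace) =
      (∑ i, RatFunc.X ^ r i) * molienSeries A (1 : G →* F) := by
  apply (algebraMap (RatFunc F) F⸨X⸩).injective
  rw [algebraMap_molienSeries_covariantRep, Finset.sum_mul, map_sum]
  simp only [algebraMap_X_pow_mul_molienSeries_one, ← map_sum]
  congr 1
  ext d
  simp only [map_sum, PowerSeries.coeff_X_pow_mul', PowerSeries.coeff_mk,
    hM.finrank_invariants_covariantRep hδ₀ h_mul hδ hM_deg hN_deg hrs hχ]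
  push_cast
  rfl

end Squeeze

end CovariantMatrices

section HomogeneousMatrices

open MvPolynomial

variable {σ n R : Type*} [CommRing R] {r : n → ℕ} {k : ℕ}

theorem isHomogeneous_det [Fintype n] [DecidableEq n] {M : Matrix n n (MvPolynomial σ R)}
    (hM : ∀ i j, (M i j).IsHomogeneous (r i)) : M.det.IsHomogeneous (∑ i, r i) := by
  rw [Matrix.det_apply]
  refine IsHomogeneous.sum _ _ _ fun π _ => ?_
  have h_prod : (∏ i, M (π i) i).IsHomogeneous (∑ i, r i) :=
    Equiv.sum_comp π r ▸ IsHomogeneous.prod _ _ _ fun i _ => hM (π i) i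
  exact (homogeneousSubmodule σ R _).smul_of_tower_mem (Equiv.Perm.sign π : ℤ) h_prod

variable [LinearOrder n] {M : Matrix n n (MvPolynomial σ R)}

theorem isHomogeneous_compoundMatrix (hM : ∀ i j, (M i j).IsHomogeneous (r i))
    (I J : Set.powersetCard n k) : (compoundMatrix k M I J).IsHomogeneous (∑ i ∈ I.1, r i) := by
  have h_sum : ∑ i ∈ I.1, r i = ∑ a, r (Set.powersetCard.ofFinEmbEquiv.symm I a) := by
    rw [← Finset.sum_coe_sort]
    exact (Equiv.sum_comp (I.1.orderIsoOfFin I.2).toEquiv fun i => r i).symm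
  rw [h_sum]
  exact isHomogeneous_det fun a b => hM _ _

theorem isHomogeneous_cofactorCompound [Fintype n] (hM : ∀ i j, (M i j).IsHomogeneous (r i))
    (J I : Set.powersetCard n k) : (cofactorCompound k M J I).IsHomogeneous (∑ i ∈ I.1ᶜ, r i) := by
  have h_sum : ∑ i ∈ I.1ᶜ, r i = ∑ i, if i ∈ I.1 then 0 else r i := by
    simp only [Finset.sum_ite, Finset.filter_notMem_eq_sdiff, Finset.compl_eq_univ_sdiff,
      Finset.sum_const_zero, zero_add]
  rw [h_sum]
  refine isHomogeneous_det fun i j => ?_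
  split_ifs with hi
  · obtain ⟨a, rfl⟩ := (Set.powersetCard.mem_range_ofFinEmbEquiv_symm_iff_mem I i).mpr hi
    rw [replaceRows_apply_emb, Matrix.one_apply]
    split_ifs
    exacts [isHomogeneous_one _ _, isHomogeneous_zero _ _ _]
  · rw [replaceRows_apply_of_notMem M J hi]
    exact hM i j

end HomogeneousMatrices

section JacobianMatrix

open MvPolynomial

variable {G ι n F : Type*} [Group G] [Field F]

/-- The Jacobian matrix of a family of polynomials. -/
def jacobianMatrix (f : ι → MvPolynomial n F) : Matrix ι n (MvPolynomial n F) :=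
  Matrix.of fun i k => pderiv k (f i)

theorem isHomogeneous_jacobianMatrix {f : ι → MvPolynomial n F} {m : ι → ℕ}
    (hf : ∀ i, (f i).IsHomogeneous (m i + 1)) (i : ι) (k : n) :
    (jacobianMatrix f i k).IsHomogeneous (m i) :=
  (hf i).pderiv

variable [Fintype n]

theorem hasCovariantRows_jacobianMatrix [DecidableEq n] {A : G →* Matrix n n F}
    {f : ι → MvPolynomial n F} (hf : ∀ i, f i ∈ invariantSubalgebra A) :
    HasCovariantRows A A (jacobianMatrix f) := by
  intro g
  ext1 i k
  have h_chain := pderiv_aeval (fun j => linSubst (A g) (X j)) (f i) k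
  have h_aeval : aeval (fun j => linSubst (A g) (X j)) = linSubst (A g) :=
    (aeval_unique (linSubst (A g))).symm
  have h_pderiv (j : n) : pderiv k (linSubst (A g) (X j)) = C (A g k j) := by
    simp [linSubst_X, pderiv_X, Pi.single_apply, smul_eq_C_mul]
  simp only [h_aeval, mem_invariantSubalgebra.mp (hf i) g, h_pderiv] at h_chain
  rw [Matrix.mul_apply, jacobianMatrix, Matrix.of_apply, h_chain]
  exact Finset.sum_congr rfl fun j _ => mul_comm _ _

theorem FundamentalInvariants.det_jacobianMatrix_ne_zero [DecidableEq n] [Finite G] [CharZero F]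
    {A : G →* Matrix n n F} {f : n → MvPolynomial n F} {e : n → ℕ}
    (hf : FundamentalInvariants A f e) (hA : Subgroup.closure {g | (1 - A g).rank = 1} = ⊤) :
    (jacobianMatrix f).det ≠ 0 :=
  (hasCovariantRows_jacobianMatrix hf.mem).det_ne_zero fun _ hp hpM =>
    hf.eq_zero_of_sum_pderiv_mul_eq_zero hA hp fun k =>
      (Finset.sum_congr rfl fun _ _ => mul_comm _ _).trans (congrFun hpM k)

end JacobianMatrix

section CompoundRepresentations

theorem prod_one_sub_eq_sum_powersetCard {n R : Type*} [Fintype n] [CommRing R] (a : n → R) :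
    ∏ i, (1 - a i) = ∑ k ∈ Finset.range (Fintype.card n + 1),
      (-1) ^ k * ∑ I : Set.powersetCard n k, ∏ i ∈ I.1, a i := by
  simp only [sub_eq_add_neg, Finset.prod_one_add, Finset.sum_powerset, Finset.card_univ,
    Finset.mul_sum]
  refine Finset.sum_congr rfl fun k _ => ?_
  rw [Finset.sum_subtype (p := (· ∈ Set.powersetCard n k)) (Finset.univ.powersetCard k)
    fun s => by simp [Set.powersetCard.mem_iff]]
  refine Finset.sum_congr rfl fun I _ => ?_
  rw [Finset.prod_neg, I.2]

open MvPolynomial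

variable {G n ι F : Type*} [Group G] [Fintype n] [LinearOrder n] [Field F]

/-- The compound matrix representation, i.e. the `k`-th exterior power of a matrix
representation. -/
def compoundHom (k : ℕ) (σ : G →* Matrix n n F) :
    G →* Matrix (Set.powersetCard n k) (Set.powersetCard n k) F where
  toFun g := compoundMatrix k (σ g)
  map_one' := by rw [map_one, compoundMatrix_one]
  map_mul' g h := by rw [map_mul, compoundMatrix_mul]

theorem HasCovariantRows.compoundMatrix {A σ : G →* Matrix n n F}
    {M : Matrix n n (MvPolynomial n F)} (hM : HasCovariantRows A σ M) (k : ℕ) :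
    HasCovariantRows A (compoundHom k σ) (compoundMatrix k M) := by
  intro g
  have h := congrArg (_root_.compoundMatrix k) (hM g)
  rw [compoundMatrix_mul, compoundMatrix_map, compoundMatrix_transpose] at h
  exact (congrArg (· * _) (compoundMatrix_map (linSubst (A g)).toRingHom k M).symm).trans h

variable {A : G →* Matrix n n F} [Fintype G] [CharZero F]

theorem FundamentalInvariants.molienSeries_trace_compoundMatrix {f : n → MvPolynomial n F}
    {m : n → ℕ} (hf : FundamentalInvariants A f (m + 1))
    (hA : Subgroup.closure {g | (1 - A g).rank = 1} = ⊤)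
    (h_det : molienSeries A (fun g => (A g).det) =
      RatFunc.X ^ (∑ i, m i) * molienSeries A (1 : G →* F)) (k : ℕ) :
    molienSeries A (fun g => (_root_.compoundMatrix k (A g)).trace) =
      (∑ I : Set.powersetCard n k, ∏ i ∈ I.1, RatFunc.X ^ m i) * molienSeries A (1 : G →* F) := by
  have hJ := hasCovariantRows_jacobianMatrix hf.mem
  have hJ_det := hf.det_jacobianMatrix_ne_zero hA
  have hJ_deg := isHomogeneous_jacobianMatrix hf.isHomogeneous
  simp only [Finset.prod_pow_eq_pow_sum]
  exact (hJ.compoundMatrix k).molienSeries_trace hJ_det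
    (compoundMatrix_mul_cofactorCompound hJ_det k) (χ := Matrix.detMonoidHom.comp A)
    hJ.smul_linSubst_det (isHomogeneous_compoundMatrix hJ_deg)
    (isHomogeneous_cofactorCompound hJ_deg)
    (fun I => Finset.sum_add_sum_compl I.1 m) h_det

theorem FundamentalInvariants.molienSeries_det_one_sub {f : n → MvPolynomial n F}
    {m : n → ℕ} (hf : FundamentalInvariants A f (m + 1))
    (hA : Subgroup.closure {g | (1 - A g).rank = 1} = ⊤)
    (h_det : molienSeries A (fun g => (A g).det) =
      RatFunc.X ^ (∑ i, m i) * molienSeries A (1 : G →* F)) :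
    molienSeries A (fun g => (1 - A g).det) =
      (∏ i, (1 - RatFunc.X ^ m i)) * molienSeries A (1 : G →* F) := by
  have h_expand (g : G) : (1 - A g).det = ∑ k ∈ Finset.range (Fintype.card n + 1),
      (-1) ^ k * (_root_.compoundMatrix k (A g)).trace := by
    simpa only [one_smul] using det_one_sub_smul_eq_sum_trace_compoundMatrix 1 (A g)
  simp only [h_expand, molienSeries_sum_mul, hf.molienSeries_trace_compoundMatrix hA h_det,
    prod_one_sub_eq_sum_powersetCard, Finset.sum_mul (Finset.range _), mul_assoc, map_pow, map_neg,
    map_one]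

end CompoundRepresentations

section Reciprocity

variable {G n F : Type*} [Field F]

theorem transcendental_inv_ratFuncX : Transcendental F (RatFunc.X : RatFunc F)⁻¹ := fun h =>
  RatFunc.transcendental_X (inv_inv (RatFunc.X : RatFunc F) ▸ h.inv)

/-- The substitution of `X⁻¹` for `X` in rational functions. -/
def substInvX : RatFunc F →ₐ[F] RatFunc F :=
  (IntermediateField.val _).comp
    (RatFunc.algEquivOfTranscendental (RatFunc.X : RatFunc F)⁻¹
      transcendental_inv_ratFuncX).toAlgHom

theorem substInvX_X : substInvX (RatFunc.X : RatFunc F) = RatFunc.X⁻¹ := by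
  simp [substInvX]

theorem substInvX_C (a : F) : substInvX (RatFunc.C a) = RatFunc.C a := by
  rw [← RatFunc.algebraMap_eq_C]
  exact substInvX.commutes a

theorem substInvX_inv_one_sub_X_pow_succ (m : ℕ) :
    substInvX (1 - (RatFunc.X : RatFunc F) ^ (m + 1))⁻¹ =
      -RatFunc.X * (RatFunc.X ^ m * (1 - RatFunc.X ^ (m + 1))⁻¹) := by
  have h_factor : 1 - (RatFunc.X : RatFunc F)⁻¹ ^ (m + 1) =
      -(RatFunc.X ^ (m + 1))⁻¹ * (1 - RatFunc.X ^ (m + 1)) := by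
    rw [mul_sub, mul_one, neg_mul, inv_mul_cancel₀ (pow_ne_zero _ RatFunc.X_ne_zero), inv_pow]
    ring
  rw [map_inv₀, map_sub, map_one, map_pow, substInvX_X, h_factor, mul_inv, inv_neg, inv_inv]
  ring

variable [Fintype n] [DecidableEq n]

theorem substInvX_inv_det_one_sub_X_smul {M N : Matrix n n F} (h : M * N = 1) :
    substInvX ((1 : Matrix n n (RatFunc F)) - (RatFunc.X : RatFunc F) • M.map RatFunc.C).det⁻¹ =
      (-RatFunc.X) ^ Fintype.card n * (RatFunc.C N.det *
        ((1 : Matrix n n (RatFunc F)) - (RatFunc.X : RatFunc F) • N.map RatFunc.C).det⁻¹) := by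
  have h_map : M.map RatFunc.C * N.map RatFunc.C = (1 : Matrix n n (RatFunc F)) := by
    rw [← Matrix.map_mul, h, Matrix.map_one _ (map_zero _) (map_one _)]
  have h_subst : (substInvX (F := F)).mapMatrix
      (1 - (RatFunc.X : RatFunc F) • M.map RatFunc.C) =
      1 - (RatFunc.X : RatFunc F)⁻¹ • M.map RatFunc.C := by
    ext i j : 1
    by_cases hij : i = j <;> simp [hij, substInvX_X, substInvX_C]
  have h_factor : (-(RatFunc.X : RatFunc F)) • (N.map RatFunc.C *
      (1 - (RatFunc.X : RatFunc F)⁻¹ • M.map RatFunc.C)) =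
      1 - (RatFunc.X : RatFunc F) • N.map RatFunc.C := by
    rw [mul_sub, Matrix.mul_smul, mul_eq_one_comm.mp h_map, smul_sub, smul_smul, mul_one, neg_mul,
      mul_inv_cancel₀ RatFunc.X_ne_zero, neg_smul, neg_smul, one_smul]
    abel
  have h_det := congrArg Matrix.det h_factor
  rw [Matrix.det_smul, Matrix.det_mul, ← RingHom.mapMatrix_apply, ← RingHom.map_det] at h_det
  have h_ne : (-(RatFunc.X : RatFunc F)) ^ Fintype.card n * RatFunc.C N.det ≠ 0 := by
    refine mul_ne_zero (pow_ne_zero _ (neg_ne_zero.mpr RatFunc.X_ne_zero)) ?_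
    exact (map_ne_zero _).mpr (Matrix.det_ne_zero_of_left_inverse h)
  rw [map_inv₀, AlgHom.map_det, h_subst, ← RingHom.mapMatrix_apply _ N, ← h_det, ← mul_assoc,
    ← mul_assoc, mul_inv, mul_inv_cancel_left₀ h_ne]

variable [Group G] [Fintype G] {A : G →* Matrix n n F}

theorem substInvX_molienSeries_one :
    substInvX (molienSeries A (1 : G →* F)) =
      (-RatFunc.X) ^ Fintype.card n * molienSeries A (fun g => (A g).det) := by
  have h_inv (g : G) : A g * A g⁻¹ = 1 := by rw [← map_mul, mul_inv_cancel, map_one]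
  simp only [molienSeries, MonoidHom.one_apply, map_one, one_mul, map_mul,
    map_sum, substInvX_inv_det_one_sub_X_smul (h_inv _), ← Finset.mul_sum]
  rw [mul_left_comm, map_inv₀, map_natCast]
  congr 2
  exact Equiv.sum_comp (Equiv.inv G) fun g => RatFunc.C (A g).det *
    ((1 : Matrix n n (RatFunc F)) - (RatFunc.X : RatFunc F) • (A g).map RatFunc.C).det⁻¹

theorem molienSeries_det {m : n → ℕ}
    (h : molienSeries A (1 : G →* F) = ∏ i, (1 - RatFunc.X ^ (m i + 1))⁻¹) :
    molienSeries A (fun g => (A g).det) =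
      RatFunc.X ^ (∑ i, m i) * molienSeries A (1 : G →* F) := by
  have h_subst := congrArg substInvX h
  simp only [substInvX_molienSeries_one, map_prod, substInvX_inv_one_sub_X_pow_succ,
    Finset.prod_mul_distrib, Finset.prod_const, Finset.card_univ, Finset.prod_pow_eq_pow_sum]
    at h_subst
  rw [← h] at h_subst
  exact mul_left_cancel₀ (pow_ne_zero _ (neg_ne_zero.mpr RatFunc.X_ne_zero)) h_subst

end Reciprocity

section InvariantForm

variable {G n R F : Type*} [Fintype n] [DecidableEq n]

theorem det_mul_det_one_sub_of_transpose_mul_mul [CommRing R] [IsDomain R] {B M : Matrix n n R}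
    (hB : B.det ≠ 0) (hM : M.transpose * B * M = B) :
    M.det * (1 - M).det = (-1) ^ Fintype.card n * (1 - M).det := by
  have h_factor : (1 - M).transpose * B * M = B * -(1 - M) := by
    rw [Matrix.transpose_sub, Matrix.transpose_one, sub_mul, sub_mul, hM, one_mul, mul_neg, mul_sub,
      mul_one, neg_sub]
  have h_det := congrArg Matrix.det h_factor
  rw [Matrix.det_mul, Matrix.det_mul, Matrix.det_mul, Matrix.det_transpose, Matrix.det_neg] at h_det
  exact mul_left_cancel₀ hB (by linear_combination h_det)

variable [Group G]

/-- The Gram matrix of the standard symmetric bilinear form averaged over a matrix group. -/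
def averagedGramMatrix [Fintype G] [CommRing R] (A : G →* Matrix n n R) : Matrix n n R :=
  ∑ g, (A g).transpose * A g

theorem transpose_mul_averagedGramMatrix_mul [Fintype G] [CommRing R] (A : G →* Matrix n n R)
    (g : G) :
    (A g).transpose * averagedGramMatrix A * A g = averagedGramMatrix A := by
  rw [averagedGramMatrix, Finset.mul_sum, Finset.sum_mul]
  refine Fintype.sum_equiv (Equiv.mulRight g) _ _ fun x => ?_
  simp only [Equiv.coe_mulRight, map_mul, Matrix.transpose_mul, mul_assoc]

variable [Field F] [LinearOrder F] [IsStrictOrderedRing F] (A : G →* Matrix n n F)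

theorem det_averagedGramMatrix_ne_zero [Fintype G] : (averagedGramMatrix A).det ≠ 0 := by
  intro h
  obtain ⟨v, hv, hAv⟩ := Matrix.exists_mulVec_eq_zero_iff.mpr h
  have h_sum : ∑ g, (A g).mulVec v ⬝ᵥ (A g).mulVec v = 0 := by
    have h_form := congrArg (v ⬝ᵥ ·) hAv
    simpa only [averagedGramMatrix, Matrix.sum_mulVec, dotProduct_sum, dotProduct_zero,
      ← Matrix.mulVec_mulVec, Matrix.dotProduct_mulVec v, Matrix.vecMul_transpose] using h_form
  have h_one := (Finset.sum_eq_zero_iff_of_nonneg fun g _ =>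
    Finset.sum_nonneg fun i _ => mul_self_nonneg _).mp h_sum 1 (Finset.mem_univ _)
  rw [map_one, Matrix.one_mulVec] at h_one
  exact hv (dotProduct_self_eq_zero.mp h_one)

theorem det_mul_det_one_sub [Finite G] (g : G) :
    (A g).det * (1 - A g).det = (-1) ^ Fintype.card n * (1 - A g).det := by
  cases nonempty_fintype G
  exact det_mul_det_one_sub_of_transpose_mul_mul (det_averagedGramMatrix_ne_zero A)
    (transpose_mul_averagedGramMatrix_mul A g)

end InvariantForm

section EllipticFakeDegree

variable {G n F : Type*} [Group G] [Fintype G] [Fintype n] [DecidableEq n]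

theorem molienSeries_det_one_sub_of_molienSeries_one [Field F] [CharZero F]
    {A : G →* Matrix n n F} (hA : Subgroup.closure {g | (1 - A g).rank = 1} = ⊤) {m : n → ℕ}
    (h : molienSeries A (1 : G →* F) = ∏ i, (1 - RatFunc.X ^ (m i + 1))⁻¹) :
    molienSeries A (fun g => (1 - A g).det) =
      ∏ i, (1 - RatFunc.X ^ m i) / (1 - RatFunc.X ^ (m i + 1)) := by
  obtain ⟨_, rfl⟩ : ∃ o : LinearOrder n, o.toDecidableEq = ‹DecidableEq n› :=
    ⟨LinearOrder.lift' (Fintype.equivFin n) (Fintype.equivFin n).injective, Subsingleton.elim _ _⟩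
  obtain ⟨f, hf⟩ :=
    exists_fundamentalInvariants_of_molienSeries_eq hA (d := m + 1) (fun _ => Nat.succ_ne_zero _) h
  rw [hf.molienSeries_det_one_sub hA (molienSeries_det h), h]
  simp only [div_eq_mul_inv, Finset.prod_mul_distrib]

end EllipticFakeDegree

theorem statement4_general {G n F : Type*} [Group G] [Fintype G] [Fintype n] [DecidableEq n]
    [Field F] [LinearOrder F] [IsStrictOrderedRing F] (A : G →* Matrix n n F)
    (hA : Subgroup.closure {g | (1 - A g).rank = 1} = ⊤) (m : n → ℕ)
    (h : (Fintype.card G : RatFunc F)⁻¹ * ∑ g, ((1 : Matrix n n (RatFunc F)) -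
        (RatFunc.X : RatFunc F) • (A g).map RatFunc.C).det⁻¹ =
      ∏ i, (1 - RatFunc.X ^ (m i + 1))⁻¹) :
    (RatFunc.X - 1) ^ Fintype.card n * (Fintype.card G : RatFunc F)⁻¹ *
        ∑ g, ((A g).map RatFunc.C).det *
          ((1 : Matrix n n (RatFunc F)) - (A g).map RatFunc.C).det /
          ((1 : Matrix n n (RatFunc F)) - (RatFunc.X : RatFunc F) • (A g).map RatFunc.C).det =
      (1 - RatFunc.X) ^ Fintype.card n *
        ∏ i, (1 - RatFunc.X ^ m i) / (1 - RatFunc.X ^ (m i + 1)) := by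
  have h_one : molienSeries A (1 : G →* F) = ∏ i, (1 - RatFunc.X ^ (m i + 1))⁻¹ := by
    simpa only [molienSeries, MonoidHom.one_apply, map_one, one_mul] using h
  have h_det (g : G) : ((A g).map RatFunc.C).det *
      ((1 : Matrix n n (RatFunc F)) - (A g).map RatFunc.C).det =
      (-1) ^ Fintype.card n * RatFunc.C (1 - A g).det := by
    rw [← RingHom.mapMatrix_apply, ← map_one (RatFunc.C (K := F)).mapMatrix, ← map_sub,
      ← RingHom.map_det, ← RingHom.map_det, ← map_mul, det_mul_det_one_sub, map_mul, map_pow,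
      map_neg, map_one]
  rw [← molienSeries_det_one_sub_of_molienSeries_one hA h_one, molienSeries]
  simp only [h_det, div_eq_mul_inv, mul_assoc, ← Finset.mul_sum]
  rw [mul_left_comm _ ((-1 : RatFunc F) ^ _), ← mul_assoc, ← mul_pow, mul_neg_one, neg_sub]

theorem statement4 (G : Type) [Group G] [Fintype G] (l : ℕ)
    (ρ : G →* Matrix.GeneralLinearGroup (Fin l) ℚ)
    -- the representation is faithful
    (hfaithful : Function.Injective ρ)
    -- the group is generated by reflections
    (hrefl : Subgroup.closure
        {g : G | Matrix.rank ((1 : Matrix (Fin l) (Fin l) ℚ) - (ρ g).val) = 1} = ⊤)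
    (m : Fin l → ℕ)
    -- `m` lists the exponents: the invariant degrees are `m i + 1`
    -- (Molien series of the invariant ring, Shephard–Todd)
    (hexponents : ((Fintype.card G : K))⁻¹ *
        ∑ g : G, (Matrix.det ((1 : Matrix (Fin l) (Fin l) K)
          - (RatFunc.X : K) • mapK (ρ g).val))⁻¹
      = ∏ i : Fin l, ((1 : K) - (RatFunc.X : K) ^ (m i + 1))⁻¹) :
    -- the elliptic fake degree of the sign character sgn = det_E :
    ((RatFunc.X : K) - 1) ^ l * ((Fintype.card G : K))⁻¹ *
      ∑ g : G, Matrix.det (mapK (ρ g).val) *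
        Matrix.det ((1 : Matrix (Fin l) (Fin l) K) - mapK (ρ g).val) /
        Matrix.det ((1 : Matrix (Fin l) (Fin l) K) - (RatFunc.X : K) • mapK (ρ g).val)
    = (1 - (RatFunc.X : K)) ^ l *
        ∏ i : Fin l, ((1 : K) - (RatFunc.X : K) ^ (m i)) /
          ((1 : K) - (RatFunc.X : K) ^ (m i + 1)) := by
  have h := statement4_general ((Units.coeHom _).comp ρ) hrefl m hexponents
  rwa [Fintype.card_fin] at h
end
end

section
/- In the Weyl group of type F_4, the two elliptic conjugacy classes labelled D_4 and C_3×A_1 have equal characteristic polynomials: det_E(1-qw) = (q^3+1)(q+1) for a representative w of either class. Hence the rational functions 1/det(1-qw) over elliptic classes of W(F_4) are NOT linearly independent. -/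
set_option maxHeartbeats 1000000
set_option synthInstance.maxHeartbeats 400000

/-!
STATEMENT 12: in the Weyl group of type F_4 (realized as the group of linear
automorphisms of ℚ^4 preserving the F_4 root system), the two elliptic conjugacy
classes labelled `D_4` and `C_3×A_1` have the same characteristic polynomial
`det_E(1-qw) = (q^3+1)(q+1)`; hence the functions `1/det(1-qw)`, over representatives
of elliptic classes of W(F_4), are NOT linearly independent: there exist two elliptic,
non-conjugate elements with equal characteristic polynomials.
-/

open scoped BigOperators

noncomputable section

/-- the F_4 root system in ℚ^4 (one standard normalization): the short roots `±e_i`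
and `(±1/2,±1/2,±1/2,±1/2)`, and the long roots `±e_i ± e_j`. -/
def rootsF4 : Set (Fin 4 → ℚ) :=
  {v | (∀ i, v i = 0 ∨ v i = 1 ∨ v i = -1) ∧
        ((Finset.univ.filter (fun i => v i ≠ 0)).card = 1 ∨
         (Finset.univ.filter (fun i => v i ≠ 0)).card = 2)} ∪
  {v | ∀ i, v i = 1/2 ∨ v i = -1/2}

/-- membership in `W(F_4)`: a matrix permuting the F_4 root system. -/
def memWF4 (M : Matrix (Fin 4) (Fin 4) ℚ) : Prop :=
  M.mulVec '' rootsF4 = rootsF4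

/-!
The linear map sending `e₁, e₂, e₃, e₄` to the orthogonal long roots `e₁ - e₂`, `-(e₃ - e₄)`,
`-(e₃ + e₄)`, `e₁ + e₂` is a similarity of ratio `√2` that turns short roots into long ones and long
roots into doubled short ones. It conjugates a Coxeter element `A` of `D₄` into an element `B` of
the class `C₃ × A₁`, so the two have the same characteristic polynomial.

They are not conjugate in `W(F₄)`: a conjugating element would carry the root `e₄`, which `A`
negates, to a root `r` negated by `B`, and all roots negated by `B` are long. But `e₄` and
`e₄ ± e₁` are roots together with `e₁`, so there is a root `s` such that `r ± s` are roots, and the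
parallelogram law then forces `r` to be short.
-/

open Matrix Polynomial

instance decidableMemRootsF4 (v : Fin 4 → ℚ) : Decidable (v ∈ rootsF4) :=
  inferInstanceAs (Decidable (_ ∨ _))

section Reflection

variable {n F : Type*} [Fintype n] [DecidableEq n] [Field F]

/-- The matrix of the orthogonal reflection `v ↦ v - (2 (r, v) / (r, r)) r` in the vector `r`, for
the standard bilinear form. -/
def reflectionMatrix (r : n → F) : Matrix n n F :=
  1 - (2 / (r ⬝ᵥ r)) • vecMulVec r r

theorem reflectionMatrix_mulVec (r v : n → F) :
    reflectionMatrix r *ᵥ v = v - (2 * (r ⬝ᵥ v) / (r ⬝ᵥ r)) • r := by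
  simp only [reflectionMatrix, sub_mulVec, one_mulVec, smul_mulVec, vecMulVec_mulVec,
    op_smul_eq_smul, smul_smul, div_mul_eq_mul_div]

theorem reflectionMatrix_mulVec_dotProduct_self {r : n → F} (hr : r ⬝ᵥ r ≠ 0) (v : n → F) :
    (reflectionMatrix r *ᵥ v) ⬝ᵥ (reflectionMatrix r *ᵥ v) = v ⬝ᵥ v := by
  simp only [reflectionMatrix_mulVec, sub_dotProduct, dotProduct_sub, smul_dotProduct,
    dotProduct_smul, smul_eq_mul, dotProduct_comm v r]
  field_simp
  ring

theorem reflectionMatrix_mulVec_mulVec {r : n → F} (hr : r ⬝ᵥ r ≠ 0) (v : n → F) :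
    reflectionMatrix r *ᵥ (reflectionMatrix r *ᵥ v) = v := by
  simp only [reflectionMatrix_mulVec, dotProduct_sub, dotProduct_smul, smul_eq_mul, sub_sub,
    ← add_smul]
  have hcoeff : 2 * (r ⬝ᵥ v) / (r ⬝ᵥ r) +
      2 * (r ⬝ᵥ v - 2 * (r ⬝ᵥ v) / (r ⬝ᵥ r) * (r ⬝ᵥ r)) / (r ⬝ᵥ r) = 0 := by
    field_simp
    ring
  rw [hcoeff, zero_smul, sub_zero]

end Reflection

theorem dotProduct_self_add_add_dotProduct_self_sub {n R : Type*} [Fintype n] [CommRing R]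
    (v w : n → R) :
    (v + w) ⬝ᵥ (v + w) + (v - w) ⬝ᵥ (v - w) = 2 * (v ⬝ᵥ v) + 2 * (w ⬝ᵥ w) := by
  simp only [add_dotProduct, dotProduct_add, sub_dotProduct, dotProduct_sub]
  ring

theorem dotProduct_self_eq_card {n R : Type*} [Fintype n] [NonAssocRing R] [DecidableEq R]
    {v : n → R} (hv : ∀ i, v i = 0 ∨ v i = 1 ∨ v i = -1) :
    v ⬝ᵥ v = (Finset.univ.filter (fun i => v i ≠ 0)).card := by
  rw [← Finset.sum_boole]
  refine Finset.sum_congr rfl fun i _ => ?_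
  by_cases h0 : v i = 0
  · simp [h0]
  · rw [if_pos h0]
    rcases (hv i).resolve_left h0 with h | h <;> rw [h] <;> simp

theorem charpolyRev_eq_of_mul_eq_mul {n R : Type*} [Fintype n] [DecidableEq n] [CommRing R]
    {A B P : Matrix n n R} (hP : IsUnit P) (hconj : P * A = B * P) :
    B.charpolyRev = A.charpolyRev := by
  obtain ⟨P, rfl⟩ := hP
  have hB : B = P * A * (P⁻¹ : (Matrix n n R)ˣ) := by rw [hconj, P.mul_inv_cancel_right]
  rw [← reverse_charpoly, ← reverse_charpoly, hB, coe_units_inv, charpoly_units_conj]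

theorem eval₂_charpolyRev {n R S : Type*} [Fintype n] [DecidableEq n] [CommRing R] [CommRing S]
    (M : Matrix n n R) (f : R →+* S) (q : S) :
    M.charpolyRev.eval₂ f q = det (1 - q • M.map f) := by
  rw [charpolyRev, ← coe_eval₂RingHom, RingHom.map_det]
  congr 1
  ext i j
  simp [one_apply, apply_ite, mul_comm (f (M i j))]

theorem eval_one_charpolyRev {n R : Type*} [Fintype n] [DecidableEq n] [CommRing R]
    (M : Matrix n n R) : M.charpolyRev.eval 1 = det (1 - M) := by
  rw [← eval₂_id, eval₂_charpolyRev, one_smul, RingHom.coe_id, Matrix.map_id]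

/-- The Hurwitz lattice `ℤ⁴ + ℤ (1/2, 1/2, 1/2, 1/2)`, whose vectors of squared length `1` and `2`
are the roots of `F₄`. -/
def hurwitzLattice : AddSubgroup (Fin 4 → ℚ) where
  carrier := {v | ∃ (k : ℤ) (z : Fin 4 → ℤ), ∀ i, v i = z i + k / 2}
  add_mem' := by
    rintro v w ⟨k, y, hv⟩ ⟨l, z, hw⟩
    refine ⟨k + l, y + z, fun i => ?_⟩
    simp only [Pi.add_apply, hv, hw]
    push_cast
    ring
  zero_mem' := ⟨0, 0, by simp⟩
  neg_mem' := by
    rintro v ⟨k, z, hv⟩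
    refine ⟨-k, -z, fun i => ?_⟩
    simp only [Pi.neg_apply, hv]
    push_cast
    ring

theorem dotProduct_self_eq_one_of_forall_half {r : Fin 4 → ℚ}
    (hr : ∀ i, r i = 1 / 2 ∨ r i = -1 / 2) : r ⬝ᵥ r = 1 := by
  have hsq : ∀ i, r i * r i = 1 / 4 := fun i => by
    rcases hr i with h | h <;> norm_num [h]
  norm_num [dotProduct, hsq]

theorem dotProduct_self_of_mem_rootsF4 {r : Fin 4 → ℚ} (hr : r ∈ rootsF4) :
    r ⬝ᵥ r = 1 ∨ r ⬝ᵥ r = 2 := by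
  rcases hr with ⟨hr, hcard⟩ | hr
  · rw [dotProduct_self_eq_card hr]
    exact_mod_cast hcard
  · exact Or.inl (dotProduct_self_eq_one_of_forall_half hr)

theorem exists_intCast_of_eq_zero_or_one_or_neg_one {R : Type*} [AddGroupWithOne R] {x : R}
    (hx : x = 0 ∨ x = 1 ∨ x = -1) : ∃ m : ℤ, x = m := by
  rcases hx with h | h | h
  exacts [⟨0, by simp [h]⟩, ⟨1, by simp [h]⟩, ⟨-1, by simp [h]⟩]

theorem forall_intCast_of_long {r : Fin 4 → ℚ} (hr : r ∈ rootsF4) (hlong : r ⬝ᵥ r = 2) (i : Fin 4) :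
    ∃ m : ℤ, r i = m := by
  rcases hr with ⟨hr, -⟩ | hr
  · exact exists_intCast_of_eq_zero_or_one_or_neg_one (hr i)
  · norm_num [dotProduct_self_eq_one_of_forall_half hr] at hlong

theorem mem_hurwitzLattice_of_mem_rootsF4 {r : Fin 4 → ℚ} (hr : r ∈ rootsF4) :
    r ∈ hurwitzLattice := by
  rcases hr with ⟨hr, -⟩ | hr
  · choose z hz using fun i => exists_intCast_of_eq_zero_or_one_or_neg_one (hr i)
    exact ⟨0, z, by simpa using hz⟩
  · have hhalf : ∀ i, ∃ m : ℤ, r i = m + 1 / 2 := fun i => by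
      rcases hr i with h | h
      exacts [⟨0, by simp [h]⟩, ⟨-1, by norm_num [h]⟩]
    choose z hz using hhalf
    exact ⟨1, z, by simpa using hz⟩

theorem mem_rootsF4_of_forall_intCast {v : Fin 4 → ℚ} (hint : ∀ i, ∃ m : ℤ, v i = m)
    (hv : v ⬝ᵥ v = 1 ∨ v ⬝ᵥ v = 2) : v ∈ rootsF4 := by
  have hentry : ∀ i, v i = 0 ∨ v i = 1 ∨ v i = -1 := fun i => by
    obtain ⟨m, hm⟩ := hint i
    have hle : v i * v i ≤ v ⬝ᵥ v :=
      Finset.single_le_sum (f := fun j => v j * v j) (fun j _ => mul_self_nonneg _)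
        (Finset.mem_univ i)
    have hm2 : m * m ≤ 2 := by
      have : (m : ℚ) * m ≤ 2 := by rw [← hm]; rcases hv with h | h <;> linarith
      exact_mod_cast this
    have hlow : -1 ≤ m := by nlinarith
    have hupp : m ≤ 1 := by nlinarith
    rw [hm]
    interval_cases m <;> simp
  refine Or.inl ⟨hentry, ?_⟩
  rw [dotProduct_self_eq_card hentry] at hv
  exact_mod_cast hv

theorem mem_rootsF4_of_forall_intCast_add_half {v : Fin 4 → ℚ}
    (hhalf : ∀ i, ∃ m : ℤ, v i = m + 1 / 2) (hv : v ⬝ᵥ v ≤ 2) : v ∈ rootsF4 := by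
  have hquarter : ∀ i, 1 / 4 ≤ v i * v i := fun i => by
    obtain ⟨m, hm⟩ := hhalf i
    have hm0 : (0 : ℚ) ≤ m * (m + 1) := by
      exact_mod_cast (by rcases le_or_gt 0 m with h | h <;> nlinarith : 0 ≤ m * (m + 1))
    rw [hm]
    linarith
  refine Or.inr fun i => ?_
  obtain ⟨m, hm⟩ := hhalf i
  have hle : v i * v i ≤ 5 / 4 := by
    rw [dotProduct, Fin.sum_univ_four] at hv
    have h₀ := hquarter 0
    have h₁ := hquarter 1
    have h₂ := hquarter 2
    have h₃ := hquarter 3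
    fin_cases i <;> dsimp only [Fin.reduceFinMk, Fin.zero_eta, Fin.mk_one] <;> linarith
  have hm1 : m * (m + 1) ≤ 1 := by
    have : (m : ℚ) * (m + 1) ≤ 1 := by rw [hm] at hle; linarith
    exact_mod_cast this
  have hlow : -1 ≤ m := by nlinarith
  have hupp : m ≤ 0 := by nlinarith
  rw [hm]
  interval_cases m <;> norm_num

theorem mem_rootsF4_iff {v : Fin 4 → ℚ} :
    v ∈ rootsF4 ↔ v ∈ hurwitzLattice ∧ (v ⬝ᵥ v = 1 ∨ v ⬝ᵥ v = 2) := by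
  refine ⟨fun hv => ⟨mem_hurwitzLattice_of_mem_rootsF4 hv, dotProduct_self_of_mem_rootsF4 hv⟩, ?_⟩
  rintro ⟨⟨k, z, hz⟩, hv⟩
  obtain ⟨l, rfl | rfl⟩ := Int.even_or_odd' k
  · exact mem_rootsF4_of_forall_intCast (fun i => ⟨z i + l, by rw [hz]; push_cast; ring⟩) hv
  · exact mem_rootsF4_of_forall_intCast_add_half
      (fun i => ⟨z i + l, by rw [hz]; push_cast; ring⟩) (by rcases hv with h | h <;> linarith)

theorem exists_intCast_eq_two_mul_dotProduct {v w : Fin 4 → ℚ} (hv : v ∈ hurwitzLattice)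
    (hw : w ∈ hurwitzLattice) : ∃ m : ℤ, 2 * (v ⬝ᵥ w) = m := by
  obtain ⟨k, y, hy⟩ := hv
  obtain ⟨l, z, hz⟩ := hw
  refine ⟨2 * (y ⬝ᵥ z) + l * ∑ i, y i + k * ∑ i, z i + 2 * k * l, ?_⟩
  simp only [dotProduct, Fin.sum_univ_four, hy, hz]
  push_cast
  ring

theorem even_dotProduct_self_iff {n : Type*} [Fintype n] {z : n → ℤ} :
    Even (z ⬝ᵥ z) ↔ Even (∑ i, z i) := by
  have hsum : Even (∑ i, z i * (z i + 1)) :=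
    Finset.even_sum _ fun i _ => Int.even_mul_succ_self (z i)
  simp only [mul_add, mul_one, Finset.sum_add_distrib] at hsum
  exact Int.even_add.mp hsum

theorem exists_intCast_eq_dotProduct_of_long {r v : Fin 4 → ℚ} (hr : r ∈ rootsF4)
    (hlong : r ⬝ᵥ r = 2) (hv : v ∈ hurwitzLattice) : ∃ m : ℤ, r ⬝ᵥ v = m := by
  choose z hz using forall_intCast_of_long hr hlong
  obtain ⟨k, y, hy⟩ := hv
  have hzz : z ⬝ᵥ z = 2 := by
    simp only [dotProduct, hz] at hlong ⊢
    exact_mod_cast hlong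
  obtain ⟨m, hm⟩ := even_dotProduct_self_iff.mp (hzz ▸ even_two)
  have hmq : ∑ i, (z i : ℚ) = m + m := by exact_mod_cast hm
  refine ⟨z ⬝ᵥ y + k * m, ?_⟩
  simp only [dotProduct, hz, hy, mul_add, Finset.sum_add_distrib, ← Finset.sum_mul, hmq]
  push_cast
  ring

theorem exists_intCast_eq_cartanInteger {r v : Fin 4 → ℚ} (hr : r ∈ rootsF4)
    (hv : v ∈ hurwitzLattice) : ∃ m : ℤ, 2 * (r ⬝ᵥ v) / (r ⬝ᵥ r) = m := by
  rcases dotProduct_self_of_mem_rootsF4 hr with h | h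
  · simpa [h] using exists_intCast_eq_two_mul_dotProduct (mem_hurwitzLattice_of_mem_rootsF4 hr) hv
  · simpa [h] using exists_intCast_eq_dotProduct_of_long hr h hv

theorem dotProduct_self_ne_zero_of_mem_rootsF4 {r : Fin 4 → ℚ} (hr : r ∈ rootsF4) :
    r ⬝ᵥ r ≠ 0 := by
  rcases dotProduct_self_of_mem_rootsF4 hr with h | h <;> norm_num [h]

theorem reflectionMatrix_mulVec_mem_rootsF4 {r v : Fin 4 → ℚ} (hr : r ∈ rootsF4)
    (hv : v ∈ rootsF4) : reflectionMatrix r *ᵥ v ∈ rootsF4 := by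
  rw [mem_rootsF4_iff] at hv ⊢
  rw [reflectionMatrix_mulVec_dotProduct_self (dotProduct_self_ne_zero_of_mem_rootsF4 hr)]
  refine ⟨?_, hv.2⟩
  obtain ⟨m, hm⟩ := exists_intCast_eq_cartanInteger hr hv.1
  rw [reflectionMatrix_mulVec, hm, Int.cast_smul_eq_zsmul]
  exact sub_mem hv.1 (zsmul_mem (mem_hurwitzLattice_of_mem_rootsF4 hr) m)

theorem memWF4_reflectionMatrix {r : Fin 4 → ℚ} (hr : r ∈ rootsF4) :
    memWF4 (reflectionMatrix r) := by
  refine Set.Subset.antisymm ?_ fun v hv => ?_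
  · rintro _ ⟨v, hv, rfl⟩
    exact reflectionMatrix_mulVec_mem_rootsF4 hr hv
  · exact ⟨_, reflectionMatrix_mulVec_mem_rootsF4 hr hv,
      reflectionMatrix_mulVec_mulVec (dotProduct_self_ne_zero_of_mem_rootsF4 hr) v⟩

theorem memWF4.mul {M N : Matrix (Fin 4) (Fin 4) ℚ} (hM : memWF4 M) (hN : memWF4 N) :
    memWF4 (M * N) := by
  have hcomp : (M * N).mulVec = M.mulVec ∘ N.mulVec := funext fun v => (mulVec_mulVec v M N).symm
  rw [memWF4, hcomp, Set.image_comp, hN, hM]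

theorem memWF4.mulVec_mem {M : Matrix (Fin 4) (Fin 4) ℚ} (hM : memWF4 M) {v : Fin 4 → ℚ}
    (hv : v ∈ rootsF4) : M *ᵥ v ∈ rootsF4 :=
  hM.subset (Set.mem_image_of_mem _ hv)

/-- A Coxeter element of the subsystem of type `D₄` formed by the long roots, with respect to the
simple roots `e₁ - e₂`, `e₂ - e₃`, `e₃ - e₄`, `e₃ + e₄`. -/
def coxeterD4 : Matrix (Fin 4) (Fin 4) ℚ :=
  reflectionMatrix ![1, -1, 0, 0] * reflectionMatrix ![0, 1, -1, 0] *
    reflectionMatrix ![0, 0, 1, -1] * reflectionMatrix ![0, 0, 1, 1]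

/-- A Coxeter element of the subsystem of type `C₃` with simple roots `e₃ - e₄`, `e₄`,
`(e₁ - e₂ - e₃ - e₄) / 2`, times the reflection in the root `e₁ + e₂` orthogonal to it. -/
def coxeterC3A1 : Matrix (Fin 4) (Fin 4) ℚ :=
  reflectionMatrix ![0, 0, 1, -1] * reflectionMatrix ![0, 0, 0, 1] *
    reflectionMatrix ![1 / 2, -1 / 2, -1 / 2, -1 / 2] * reflectionMatrix ![1, 1, 0, 0]

theorem coxeterD4_eq :
    coxeterD4 = !![0, 0, -1, 0; 1, 0, 0, 0; 0, 1, 0, 0; 0, 0, 0, -1] := by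
  decide +kernel

theorem coxeterC3A1_eq :
    coxeterC3A1 = !![-1 / 2, -1 / 2, 1 / 2, 1 / 2; -1 / 2, -1 / 2, -1 / 2, -1 / 2;
      -1 / 2, 1 / 2, 1 / 2, -1 / 2; 1 / 2, -1 / 2, 1 / 2, -1 / 2] := by
  decide +kernel

theorem memWF4_coxeterD4 : memWF4 coxeterD4 := by
  refine .mul (.mul (.mul ?_ ?_) ?_) ?_ <;> exact memWF4_reflectionMatrix (by decide +kernel)

theorem memWF4_coxeterC3A1 : memWF4 coxeterC3A1 := by
  refine .mul (.mul (.mul ?_ ?_) ?_) ?_ <;> exact memWF4_reflectionMatrix (by decide +kernel)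

theorem charpolyRev_coxeterD4 : coxeterD4.charpolyRev = (X ^ 3 + 1) * (X + 1) := by
  have hmatrix : 1 - (X : ℚ[X]) • coxeterD4.map C =
      !![1, 0, X, 0; -X, 1, 0, 0; 0, -X, 1, 0; 0, 0, 0, 1 + X] := by
    rw [coxeterD4_eq]
    ext1 i j
    fin_cases i <;> fin_cases j <;> simp
  rw [charpolyRev, hmatrix, det_succ_row _ 3]
  simp [Fin.sum_univ_four, det_fin_three, Fin.succAbove]
  ring

/-- The matrix whose columns are the long roots `e₁ - e₂`, `-(e₃ - e₄)`, `-(e₃ + e₄)`, `e₁ + e₂`. It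
exchanges the directions of the short and the long roots of `F₄`. -/
def rootLengthSwap : Matrix (Fin 4) (Fin 4) ℚ :=
  !![1, 0, 0, 1; -1, 0, 0, 1; 0, -1, -1, 0; 0, 1, -1, 0]

theorem isUnit_rootLengthSwap : IsUnit rootLengthSwap :=
  (isUnit_iff_isUnit_det _).mpr <| isUnit_det_of_right_inverse
    (B := (1 / 2 : ℚ) • rootLengthSwapᵀ) (by decide +kernel)

theorem rootLengthSwap_mul_coxeterD4 :
    rootLengthSwap * coxeterD4 = coxeterC3A1 * rootLengthSwap := by
  decide +kernel

theorem charpolyRev_coxeterC3A1 : coxeterC3A1.charpolyRev = (X ^ 3 + 1) * (X + 1) := by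
  rw [charpolyRev_eq_of_mul_eq_mul isUnit_rootLengthSwap rootLengthSwap_mul_coxeterD4,
    charpolyRev_coxeterD4]

theorem dotProduct_self_le_one_of_add_mem_of_sub_mem {r s : Fin 4 → ℚ} (hs : s ∈ rootsF4)
    (hadd : r + s ∈ rootsF4) (hsub : r - s ∈ rootsF4) : r ⬝ᵥ r ≤ 1 := by
  have hpar := dotProduct_self_add_add_dotProduct_self_sub r s
  rcases dotProduct_self_of_mem_rootsF4 hs with h₁ | h₁ <;>
  rcases dotProduct_self_of_mem_rootsF4 hadd with h₂ | h₂ <;>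
  rcases dotProduct_self_of_mem_rootsF4 hsub with h₃ | h₃ <;>
  linarith

theorem coxeterC3A1_mulVec_eq_neg_iff {v : Fin 4 → ℚ} :
    coxeterC3A1 *ᵥ v = -v ↔ v 2 = 0 ∧ v 3 = v 1 - v 0 := by
  simp only [coxeterC3A1_eq, funext_iff, Fin.forall_fin_succ, mulVec, dotProduct,
    Fin.sum_univ_four, of_apply, cons_val', cons_val_zero, cons_val_fin_one, cons_val_one, cons_val,
    Pi.neg_apply, Fin.succ_zero_eq_one, Fin.succ_one_eq_two, Fin.reduceSucc, cons_val_succ,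
    IsEmpty.forall_iff, and_true]
  grind

theorem dotProduct_self_eq_two_of_coxeterC3A1_mulVec_eq_neg {r : Fin 4 → ℚ} (hr : r ∈ rootsF4)
    (hneg : coxeterC3A1 *ᵥ r = -r) : r ⬝ᵥ r = 2 := by
  obtain ⟨h₂, h₃⟩ := coxeterC3A1_mulVec_eq_neg_iff.mp hneg
  obtain ⟨k, z, hz⟩ := mem_hurwitzLattice_of_mem_rootsF4 hr
  have h₀ : r 0 = ↑(z 0 - z 2) := by push_cast; linarith [hz 0, hz 2]
  have h₁ : r 1 = ↑(z 1 - z 2) := by push_cast; linarith [hz 1, hz 2]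
  have heven : r ⬝ᵥ r = 2 * (r 0 ^ 2 - r 0 * r 1 + r 1 ^ 2) := by
    simp only [dotProduct, Fin.sum_univ_four, h₂, h₃]
    ring
  refine (dotProduct_self_of_mem_rootsF4 hr).resolve_left fun hshort => ?_
  rw [heven, h₀, h₁] at hshort
  norm_cast at hshort
  omega

theorem coxeterD4_mulVec_e₄ : coxeterD4 *ᵥ ![0, 0, 0, 1] = -![0, 0, 0, 1] := by
  decide +kernel

theorem not_conj_coxeterD4_coxeterC3A1 :
    ¬ ∃ N : Matrix (Fin 4) (Fin 4) ℚ, memWF4 N ∧ N * coxeterD4 = coxeterC3A1 * N := by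
  rintro ⟨N, hN, hconj⟩
  have hneg : coxeterC3A1 *ᵥ (N *ᵥ ![0, 0, 0, 1]) = -(N *ᵥ ![0, 0, 0, 1]) := by
    rw [mulVec_mulVec, ← hconj, ← mulVec_mulVec, coxeterD4_mulVec_e₄, mulVec_neg]
  have hlong := dotProduct_self_eq_two_of_coxeterC3A1_mulVec_eq_neg
    (hN.mulVec_mem (by decide +kernel)) hneg
  have hshort : (N *ᵥ ![0, 0, 0, 1]) ⬝ᵥ (N *ᵥ ![0, 0, 0, 1]) ≤ 1 := by
    apply dotProduct_self_le_one_of_add_mem_of_sub_mem (s := N *ᵥ ![1, 0, 0, 0])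
    · exact hN.mulVec_mem (by decide +kernel)
    · rw [← mulVec_add]
      exact hN.mulVec_mem (by decide +kernel)
    · rw [← mulVec_sub]
      exact hN.mulVec_mem (by decide +kernel)
  linarith

theorem statement12 :
    ∃ A B : Matrix (Fin 4) (Fin 4) ℚ,
      memWF4 A ∧ memWF4 B ∧
      -- both classes (labelled D_4 and C_3×A_1) are elliptic …
      Matrix.det ((1 : Matrix (Fin 4) (Fin 4) ℚ) - A) ≠ 0 ∧
      Matrix.det ((1 : Matrix (Fin 4) (Fin 4) ℚ) - B) ≠ 0 ∧
      -- … A is a Coxeter element of a D_4 subsystem: it has order 6 and its class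
      -- has the stated characteristic polynomial; B is a product of a Coxeter element
      -- of a C_3 subsystem with an orthogonal reflection (an involution times an
      -- order-6 part), in particular the two are NOT conjugate in W(F_4) …
      ¬ (∃ N : Matrix (Fin 4) (Fin 4) ℚ, memWF4 N ∧ N * A = B * N) ∧
      -- … yet both have characteristic polynomial det(1-qw) = (q^3+1)(q+1)
      (∀ q : K, Matrix.det ((1 : Matrix (Fin 4) (Fin 4) K) - q • (A.map RatFunc.C))
          = (q ^ 3 + 1) * (q + 1)) ∧
      (∀ q : K, Matrix.det ((1 : Matrix (Fin 4) (Fin 4) K) - q • (B.map RatFunc.C))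
          = (q ^ 3 + 1) * (q + 1)) ∧
      -- hence the family `1/det(1-qw)` over (pairwise non-conjugate representatives
      -- of) elliptic classes is not linearly independent
      ¬ LinearIndependent ℚ (fun b : Bool =>
          (Matrix.det ((1 : Matrix (Fin 4) (Fin 4) K)
            - (RatFunc.X : K) • ((cond b A B).map RatFunc.C)))⁻¹) := by
  have hdetA (q : K) : det (1 - q • coxeterD4.map RatFunc.C) = (q ^ 3 + 1) * (q + 1) := by
    simp [← eval₂_charpolyRev, charpolyRev_coxeterD4, eval₂_mul]
  have hdetB (q : K) : det (1 - q • coxeterC3A1.map RatFunc.C) = (q ^ 3 + 1) * (q + 1) := by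
    simp [← eval₂_charpolyRev, charpolyRev_coxeterC3A1, eval₂_mul]
  refine ⟨coxeterD4, coxeterC3A1, memWF4_coxeterD4, memWF4_coxeterC3A1, ?_, ?_,
    not_conj_coxeterD4_coxeterC3A1, hdetA, hdetB, fun hindep => ?_⟩
  · norm_num [← eval_one_charpolyRev, charpolyRev_coxeterD4]
  · norm_num [← eval_one_charpolyRev, charpolyRev_coxeterC3A1]
  · have heq : true = false := hindep.injective <| congrArg (·⁻¹) <|
      (hdetA RatFunc.X).trans (hdetB RatFunc.X).symm
    exact Bool.noConfusion heq
end
end
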